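/- arXiv:2409.19160 — 2 statements merged into one kernel-verified Lean document; each statement's English description precedes it below -/
import Mathlib

section
/- (Jump relation for the normal derivative of the clamped-plate layer potential K₁, biharmonic part.) Let σ : ℝ → ℝ be infinitely differentiable with σ(s+L) = σ(s) for all s, and fix t ∈ ℝ. Define K(x, γ(s)) = G^B_{n_x n_y n_y n_y}(x, γ(s)) + 3·G^B_{n_x n_y τ_y τ_y}(x, γ(s)), where with r = x − γ(s), n_x = n(t), n_y = n(s), τ_y = τ(s): G^B_{n_x n_y n_y n_y}(x, γ(s)) = −(3/(4π))(n_x·n_y)/‖r‖² + (3/(2π))(r·n_y)(r·n_x)/‖r‖⁴ + (3/(2π))(r·n_y)²(n_x·n_y)/‖r‖⁴ − (2/π)(r·n_y)³(r·n_x)/‖r‖⁶, and G^B_{n_x n_y τ_y τ_y}(x, γ(s)) = (1/(2π))(n_x·n_y)(r·τ_y)²/‖r‖⁴ + (1/π)(r·n_y)(r·τ_y)(n_x·τ_y)/‖r‖⁴ − (2/π)(r·n_y)(r·τ_y)²(r·n_x)/‖r‖⁶ − (1/(4π))(n_x·n_y)/‖r‖² + (1/(2π))(r·n_y)(r·n_x)/‖r‖⁴.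 Then there is h₀ > 0 such that for 0 < |h| < h₀ the point γ(t) + h·n(t) does not lie on the curve, the function s ↦ K(γ(t), γ(s))·σ(s) is bounded on [0, L] with Lebesgue integral I := ∫₀^L K(γ(t), γ(s))σ(s) ds, and lim_{h→0⁺} ∫₀^L K(γ(t)+h·n(t), γ(s))σ(s) ds = κ(t)·σ(t) + I, while lim_{h→0⁻} ∫₀^L K(γ(t)+h·n(t), γ(s))σ(s) ds = −κ(t)·σ(t) + I. -/
open Real Filter Topology MeasureTheory

noncomputable section

/-- Euclidean dot product on `ℝ × ℝ`. -/
def dot2 (v w : ℝ × ℝ) : ℝ := v.1 * w.1 + v.2 * w.2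

/-- Unit tangent vector `τ(s) = γ′(s)`. -/
def tang (γ : ℝ → ℝ × ℝ) (s : ℝ) : ℝ × ℝ := deriv γ s

/-- Unit normal vector `n(s) = (τ₂(s), −τ₁(s))`. -/
def nor (γ : ℝ → ℝ × ℝ) (s : ℝ) : ℝ × ℝ := ((deriv γ s).2, -(deriv γ s).1)

/-- Signed curvature `κ(s) = −γ″(s)·n(s)`. -/
def curv (γ : ℝ → ℝ × ℝ) (s : ℝ) : ℝ := -(dot2 (deriv (deriv γ) s) (nor γ s))

/-- The kernel `K(x, γ(s)) = G^B_{n_x n_y n_y n_y}(x, γ(s)) + 3 G^B_{n_x n_y τ_y τ_y}(x, γ(s))`,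
given by its explicit formula, with `r = x − γ(s)`, `n_x = n(t)`, `n_y = n(s)`, `τ_y = τ(s)`. -/
def K21clamped (γ : ℝ → ℝ × ℝ) (t : ℝ) (x : ℝ × ℝ) (s : ℝ) : ℝ :=
  (-(3 / (4 * π)) * dot2 (nor γ t) (nor γ s) / dot2 (x - γ s) (x - γ s)
      + 3 / (2 * π) * dot2 (x - γ s) (nor γ s) * dot2 (x - γ s) (nor γ t)
        / (dot2 (x - γ s) (x - γ s)) ^ 2
      + 3 / (2 * π) * (dot2 (x - γ s) (nor γ s)) ^ 2 * dot2 (nor γ t) (nor γ s)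
        / (dot2 (x - γ s) (x - γ s)) ^ 2
      - 2 / π * (dot2 (x - γ s) (nor γ s)) ^ 3 * dot2 (x - γ s) (nor γ t)
        / (dot2 (x - γ s) (x - γ s)) ^ 3)
    + 3 *
      (1 / (2 * π) * dot2 (nor γ t) (nor γ s) * (dot2 (x - γ s) (tang γ s)) ^ 2
          / (dot2 (x - γ s) (x - γ s)) ^ 2
        + 1 / π * dot2 (x - γ s) (nor γ s) * dot2 (x - γ s) (tang γ s)
            * dot2 (nor γ t) (tang γ s) / (dot2 (x - γ s) (x - γ s)) ^ 2
        - 2 / π * dot2 (x - γ s) (nor γ s) * (dot2 (x - γ s) (tang γ s)) ^ 2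
            * dot2 (x - γ s) (nor γ t) / (dot2 (x - γ s) (x - γ s)) ^ 3
        - 1 / (4 * π) * dot2 (nor γ t) (nor γ s) / dot2 (x - γ s) (x - γ s)
        + 1 / (2 * π) * dot2 (x - γ s) (nor γ s) * dot2 (x - γ s) (nor γ t)
          / (dot2 (x - γ s) (x - γ s)) ^ 2)

/-- Integrated-by-parts reduced kernel factor. -/
def Xf (a b d N k σ φ : ℝ) : ℝ :=
  a * b / (a ^ 2 + b ^ 2) * φ + k * N * σ * (2 * b ^ 2 - a ^ 2) / (a ^ 2 + b ^ 2)
    + 4 * d * σ * a ^ 2 * b / (a ^ 2 + b ^ 2) ^ 2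

/-- Reduced kernel times density. -/
def Ef (a b d N σ : ℝ) : ℝ :=
  σ * (N * a ^ 2 * (a ^ 2 - 3 * b ^ 2) / (a ^ 2 + b ^ 2) ^ 3
    + 4 * d * a ^ 3 * b / (a ^ 2 + b ^ 2) ^ 3)

lemma bd1 (A : ℝ) (hA : 0 < A) (f f1 : ℝ → ℝ) (hf : ∀ u, HasDerivAt f (f1 u) u)
    (hc : Continuous f1) (h0 : f 0 = 0) :
    ∃ C, 0 ≤ C ∧ ∀ u ∈ Set.Icc (-A) A, |f u| ≤ C * |u| := by
  obtain ⟨C, hC⟩ := (isCompact_Icc (a := -A) (b := A)).exists_bound_of_continuousOn hc.continuousOn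
  refine ⟨C, (norm_nonneg _).trans (hC 0 ⟨by linarith, hA.le⟩), fun u hu => ?_⟩
  have := (convex_Icc (-A) A).norm_image_sub_le_of_norm_hasDerivWithin_le
    (fun x _ => (hf x).hasDerivWithinAt) hC (show (0:ℝ) ∈ Set.Icc (-A) A from ⟨by linarith, hA.le⟩) hu
  simpa [h0] using this

lemma bd2 (A : ℝ) (f f1 : ℝ → ℝ) (hf : ∀ u, HasDerivAt f (f1 u) u) (C : ℝ) (hC : 0 ≤ C)
    (h1 : ∀ u ∈ Set.Icc (-A) A, |f1 u| ≤ C * |u|) (h0 : f 0 = 0) :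
    ∀ u ∈ Set.Icc (-A) A, |f u| ≤ C * u ^ 2 := by
  intro u hu
  have hu' : |u| ≤ A := abs_le.2 hu
  have := (convex_Icc (-|u|) |u|).norm_image_sub_le_of_norm_hasDerivWithin_le (C := C * |u|)
    (fun x _ => (hf x).hasDerivWithinAt) (fun x hx => by
      have hx' := abs_le.2 hx
      have := h1 x (abs_le.1 (hx'.trans hu'))
      exact this.trans (by gcongr)) (show (0:ℝ) ∈ _ from ⟨by simp, by simp⟩)
      (show u ∈ _ from ⟨neg_abs_le u, le_abs_self u⟩)
  simp only [h0, sub_zero, Real.norm_eq_abs] at this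
  rwa [mul_assoc, abs_mul_abs_self, ← sq] at this

lemma lowb (A : ℝ) (hA : 0 < A) (a b k : ℝ → ℝ)
    (ha : ∀ u, HasDerivAt a (k u * b u) u) (hb : ∀ u, HasDerivAt b (-1 - k u * a u) u)
    (a0 : a 0 = 0) (b0 : b 0 = 0)
    (hρ : ∀ u ∈ Set.Icc (-A) A, u ≠ 0 → a u ^ 2 + b u ^ 2 ≠ 0) :
    ∃ c, 0 < c ∧ ∀ u ∈ Set.Icc (-A) A, c * u ^ 2 ≤ a u ^ 2 + b u ^ 2 := by
  have hcont : ∀ (f f1 : ℝ → ℝ), (∀ u, HasDerivAt f (f1 u) u) → Continuous (dslope f 0) := by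
    intro f f1 hf
    have hd : Differentiable ℝ f := fun u => (hf u).differentiableAt
    rw [← continuousOn_univ, continuousOn_dslope (by simp)]
    exact ⟨hd.continuous.continuousOn, hd 0⟩
  have hm : Continuous (fun u => dslope a 0 u ^ 2 + dslope b 0 u ^ 2) :=
    ((hcont a _ ha).pow 2).add ((hcont b _ hb).pow 2)
  have key : ∀ u, a u ^ 2 + b u ^ 2 = (dslope a 0 u ^ 2 + dslope b 0 u ^ 2) * u ^ 2 := by
    intro u
    have h1 := sub_smul_dslope a 0 u
    have h2 := sub_smul_dslope b 0 u
    simp only [sub_zero, a0, b0, smul_eq_mul] at h1 h2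
    rw [← h1, ← h2]; ring
  obtain ⟨x, hx, hmin⟩ := (isCompact_Icc (a := -A) (b := A)).exists_isMinOn
    ⟨0, by linarith, hA.le⟩ hm.continuousOn
  refine ⟨dslope a 0 x ^ 2 + dslope b 0 x ^ 2, ?_, fun u hu => ?_⟩
  · have hne : dslope a 0 x ^ 2 + dslope b 0 x ^ 2 ≠ 0 := by
      by_cases h : x = 0
      · subst h
        simp [dslope_same, (ha 0).deriv, (hb 0).deriv, a0, b0]
      · intro h'
        apply hρ x hx h
        rw [key, h', zero_mul]
    positivity
  · rw [key]
    have := hmin hu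
    simp only [Set.mem_ofPred_eq] at this
    gcongr

lemma Ef_bound (a b d N σ : ℝ) (hN : |N| ≤ 1) (hd : |d| ≤ 1) :
    |Ef a b d N σ| ≤ 7 * |σ| * (a ^ 2 / (a ^ 2 + b ^ 2) ^ 2) := by
  unfold Ef
  by_cases h : a ^ 2 + b ^ 2 = 0
  · simp [h]
  have hp : 0 < a ^ 2 + b ^ 2 := by positivity
  have e : N * a ^ 2 * (a ^ 2 - 3 * b ^ 2) / (a ^ 2 + b ^ 2) ^ 3
    + 4 * d * a ^ 3 * b / (a ^ 2 + b ^ 2) ^ 3 = 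
    (a ^ 2 / (a ^ 2 + b ^ 2) ^ 2) * ((N * (a ^ 2 - 3 * b ^ 2) + 4 * d * (a * b)) / (a ^ 2 + b ^ 2)) := by
    field_simp
  rw [e, abs_mul, abs_mul, abs_of_nonneg (by positivity : 0 ≤ a ^ 2 / (a ^ 2 + b ^ 2) ^ 2)]
  have h7 : |(N * (a ^ 2 - 3 * b ^ 2) + 4 * d * (a * b)) / (a ^ 2 + b ^ 2)| ≤ 7 := by
    rw [abs_div, abs_of_pos hp, div_le_iff₀ hp]
    have h1 : |a ^ 2 - 3 * b ^ 2| ≤ 3 * (a ^ 2 + b ^ 2) := by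
      rw [abs_le]; constructor <;> nlinarith [sq_nonneg a, sq_nonneg b]
    have h2 : |a * b| ≤ a ^ 2 + b ^ 2 := by
      rw [abs_le]; constructor <;> nlinarith [sq_nonneg (a + b), sq_nonneg (a - b)]
    calc _ ≤ |N * (a ^ 2 - 3 * b ^ 2)| + |4 * d * (a * b)| := abs_add_le _ _
      _ = |N| * |a ^ 2 - 3 * b ^ 2| + 4 * |d| * |a * b| := by
        rw [abs_mul, abs_mul, abs_mul]; norm_num
      _ ≤ 1 * (3 * (a ^ 2 + b ^ 2)) + 4 * 1 * (a ^ 2 + b ^ 2) := by gcongr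
      _ = _ := by ring
  calc _ ≤ |σ| * ((a ^ 2 / (a ^ 2 + b ^ 2) ^ 2) * 7) := by gcongr
    _ = _ := by ring

lemma Xf_bound (a b d N k σ φ C : ℝ) (hN : |N| ≤ 1) (hC : 0 ≤ C)
    (hd : d ^ 2 ≤ C * (a ^ 2 + b ^ 2)) :
    |Xf a b d N k σ φ| ≤ |φ| + 2 * |k| * |σ| + 4 * (C + 1) * |σ| := by
  unfold Xf
  by_cases h : a ^ 2 + b ^ 2 = 0
  · simp [h]; positivity
  have hp : 0 < a ^ 2 + b ^ 2 := by positivity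
  have h2 : |a * b / (a ^ 2 + b ^ 2)| ≤ 1 := by
    rw [abs_div, abs_of_pos hp, div_le_iff₀ hp]
    rw [abs_le]; constructor <;> nlinarith [sq_nonneg (a + b), sq_nonneg (a - b)]
  have h1 : |(2 * b ^ 2 - a ^ 2) / (a ^ 2 + b ^ 2)| ≤ 2 := by
    rw [abs_div, abs_of_pos hp, div_le_iff₀ hp]
    rw [abs_le]; constructor <;> nlinarith [sq_nonneg a, sq_nonneg b]
  have h3 : |d * b / (a ^ 2 + b ^ 2)| ≤ C + 1 := by
    rw [abs_div, abs_of_pos hp, div_le_iff₀ hp]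
    rw [abs_le]; constructor <;> nlinarith [sq_nonneg (d + b), sq_nonneg (d - b), sq_nonneg a]
  have h4 : |a ^ 2 / (a ^ 2 + b ^ 2)| ≤ 1 := by
    rw [abs_div, abs_of_pos hp, div_le_iff₀ hp]
    rw [abs_le]; constructor <;> nlinarith [sq_nonneg a, sq_nonneg b]
  have e : a * b / (a ^ 2 + b ^ 2) * φ + k * N * σ * (2 * b ^ 2 - a ^ 2) / (a ^ 2 + b ^ 2)
    + 4 * d * σ * a ^ 2 * b / (a ^ 2 + b ^ 2) ^ 2 = (a * b / (a ^ 2 + b ^ 2)) * φ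
     + N * (k * σ) * ((2 * b ^ 2 - a ^ 2) / (a ^ 2 + b ^ 2))
     + 4 * ((d * b / (a ^ 2 + b ^ 2)) * (a ^ 2 / (a ^ 2 + b ^ 2)) * σ) := by
    field_simp
  rw [e]
  refine (abs_add_le _ _).trans ?_
  refine (add_le_add_left (abs_add_le _ _) _).trans ?_
  simp only [abs_mul] at *
  calc _ ≤ 1 * |φ| + 1 * (|k| * |σ|) * 2 + |4| * ((C + 1) * 1 * |σ|) := by
        gcongr
    _ = _ := by norm_num; ring

lemma W_deriv (a b d N k σ : ℝ → ℝ) (σ1 u : ℝ) 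
    (hN : HasDerivAt N (k u * d u) u)
    (ha : HasDerivAt a (k u * b u) u) (hb : HasDerivAt b (-1 - k u * a u) u)
    (hσ : HasDerivAt σ σ1 u) (hρ : a u ^ 2 + b u ^ 2 ≠ 0) :
    HasDerivAt (fun u => N u * σ u * (a u ^ 2 * b u / (a u ^ 2 + b u ^ 2) ^ 2))
      (a u * Xf (a u) (b u) (d u) (N u) (k u) (σ u) (k u * d u * σ u + N u * σ1) / (a u ^ 2 + b u ^ 2)
        - Ef (a u) (b u) (d u) (N u) (σ u)) u := by
  have := (hN.mul hσ).mul (((ha.pow 2).mul hb).div (((ha.pow 2).add (hb.pow 2)).pow 2) (pow_ne_zero 2 hρ))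
  refine this.congr_deriv ?_
  unfold Xf Ef
  simp only [Pi.mul_apply, Pi.pow_apply, Pi.add_apply, Pi.div_apply]
  field_simp
  ring

lemma q_integral (e k σ σ1 : ℝ) (he : e ^ 2 = 1) :
    (∫ v : ℝ, Xf e (-v) (-k * v) 1 k σ σ1 / (e ^ 2 + (-v) ^ 2)) = π * k * σ := by
  have h0 : ∀ v : ℝ, 1 + v ^ 2 ≠ 0 := fun v => by positivity
  set F : ℝ → ℝ := fun v => k * σ * arctan v - k * σ * (v / (1 + v ^ 2)) 
    - k * σ * (v / (1 + v ^ 2) ^ 2) + e * σ1 / 2 * (1 / (1 + v ^ 2)) with hF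
  have hderiv : ∀ v, HasDerivAt F (Xf e (-v) (-k * v) 1 k σ σ1 / (e ^ 2 + (-v) ^ 2)) v := by
    intro v
    have hq : HasDerivAt (fun v : ℝ => 1 + v ^ 2) (2 * v) v := by
      simpa using (hasDerivAt_pow 2 v).const_add 1
    have := ((((hasDerivAt_arctan v).const_mul (k * σ)).sub
      (((hasDerivAt_id v).div hq (h0 v)).const_mul (k * σ))).sub
      (((hasDerivAt_id v).div (hq.pow 2) (pow_ne_zero 2 (h0 v))).const_mul (k * σ))).add
      (((hasDerivAt_const v (1:ℝ)).div hq (h0 v)).const_mul (e * σ1 / 2))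
    refine this.congr_deriv ?_
    unfold Xf
    have := h0 v
    simp only [he, neg_sq, id, Pi.pow_apply]
    field_simp
    ring
  have hint : Integrable (fun v : ℝ => Xf e (-v) (-k * v) 1 k σ σ1 / (e ^ 2 + (-v) ^ 2)) := by
    refine ((integrable_inv_one_add_sq).const_mul 
      (|σ1| + 2 * |k| * |σ| + 4 * (k ^ 2 + 1) * |σ|)).mono' ?_ ?_
    · apply Measurable.aestronglyMeasurable
      unfold Xf; fun_prop
    · refine Eventually.of_forall fun v => ?_
      have hb := Xf_bound e (-v) (-k * v) 1 k σ σ1 (k ^ 2) (by simp) (sq_nonneg k) 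
        (by nlinarith [mul_nonneg (sq_nonneg k) (sq_nonneg e)])
      rw [norm_div, Real.norm_eq_abs, div_eq_mul_inv]
      have e2 : ‖e ^ 2 + (-v) ^ 2‖ = 1 + v ^ 2 := by
        rw [he, neg_sq, Real.norm_eq_abs, abs_of_pos (by positivity)]
      rw [e2]
      gcongr
  have hinv : ∀ l : Filter ℝ, Tendsto (fun v : ℝ => v ^ 2) l atTop → 
      Tendsto (fun v : ℝ => 1 / (1 + v ^ 2)) l (𝓝 0) := by
    intro l hl
    simp only [one_div]
    exact tendsto_inv_atTop_zero.comp (tendsto_atTop_add_const_left _ _ hl)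
  have hlim : ∀ (l : Filter ℝ) (c : ℝ), Tendsto (fun v : ℝ => v ^ 2) l atTop → 
      Tendsto (fun v : ℝ => v⁻¹) l (𝓝 0) → Tendsto arctan l (𝓝 c) → 
      Tendsto F l (𝓝 (k * σ * c)) := by
    intro l c hl hl' hc
    have hne : ∀ᶠ v in l, v ≠ 0 := by
      filter_upwards [hl.eventually_gt_atTop 0] with v hv h
      simp [h] at hv
    have h1 := hinv l hl
    have h2 : Tendsto (fun v : ℝ => v / (1 + v ^ 2)) l (𝓝 0) := by
      have : Tendsto (fun v : ℝ => v⁻¹ * (1 - 1 / (1 + v ^ 2))) l (𝓝 (0 * (1 - 0))) :=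
        hl'.mul (tendsto_const_nhds.sub h1)
      rw [zero_mul] at this
      refine this.congr' ?_
      filter_upwards [hne] with v hv
      have := h0 v
      field_simp
      ring
    have h3 : Tendsto (fun v : ℝ => v / (1 + v ^ 2) ^ 2) l (𝓝 0) := by
      have := h2.mul h1
      rw [zero_mul] at this
      refine this.congr fun v => ?_
      have := h0 v
      field_simp
    have := (((hc.const_mul (k * σ)).sub (h2.const_mul (k * σ))).sub (h3.const_mul (k * σ))).add
      (h1.const_mul (e * σ1 / 2))
    simpa [hF] using this
  rw [integral_of_hasDerivAt_of_tendsto hderiv hint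
    (hlim atBot (-(π/2)) (tendsto_pow_atTop (n := 2) (by norm_num) |>.comp tendsto_abs_atBot_atTop |>.congr (by simp)) 
      tendsto_inv_atBot_zero (tendsto_nhds_of_tendsto_nhdsWithin tendsto_arctan_atBot))
    (hlim atTop (π/2) (tendsto_pow_atTop (by norm_num)) tendsto_inv_atTop_zero 
      (tendsto_nhds_of_tendsto_nhdsWithin tendsto_arctan_atTop))]
  ring

set_option maxHeartbeats 4000000 in
lemma main_abs (A : ℝ) (hA : 0 < A) (N d a b k σ σ1 : ℝ → ℝ)
    (hN : ∀ u, HasDerivAt N (k u * d u) u) (hd : ∀ u, HasDerivAt d (-(k u * N u)) u)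
    (ha : ∀ u, HasDerivAt a (k u * b u) u) (hb : ∀ u, HasDerivAt b (-1 - k u * a u) u)
    (hσ : ∀ u, HasDerivAt σ (σ1 u) u) (kc : Continuous k) (hcσ : Continuous σ1)
    (N0 : N 0 = 1) (d0 : d 0 = 0) (a0 : a 0 = 0) (b0 : b 0 = 0)
    (hunit : ∀ u, N u ^ 2 + d u ^ 2 = 1)
    (hρ : ∀ u ∈ Set.Icc (-A) A, u ≠ 0 → a u ^ 2 + b u ^ 2 ≠ 0)
    (pN : N (-A) = N A) (pd : d (-A) = d A) (pa : a (-A) = a A) (pb : b (-A) = b A)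
    (pσ : σ (-A) = σ A) :
    ∃ h₀ > (0 : ℝ),
      (∀ h : ℝ, 0 < |h| → |h| < h₀ → ∀ u ∈ Set.Icc (-A) A,
        (a u + h * N u) ^ 2 + (b u + h * d u) ^ 2 ≠ 0) ∧
      (∃ M : ℝ, ∀ u ∈ Set.Icc (-A) A, |Ef (a u) (b u) (d u) (N u) (σ u)| ≤ M) ∧
      ∀ e : ℝ, e ^ 2 = 1 → Tendsto
        (fun η : ℝ => ∫ u in (-A)..A, Ef (a u + (e * η) * N u) (b u + (e * η) * d u) (d u) (N u) (σ u))
        (𝓝[>] (0 : ℝ))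
        (𝓝 (e * (π * k 0 * σ 0) + ∫ u in (-A)..A, Ef (a u) (b u) (d u) (N u) (σ u))) := by
  have Nc : Continuous N := continuous_iff_continuousAt.2 fun u => (hN u).continuousAt
  have dc : Continuous d := continuous_iff_continuousAt.2 fun u => (hd u).continuousAt
  have ac : Continuous a := continuous_iff_continuousAt.2 fun u => (ha u).continuousAt
  have bc : Continuous b := continuous_iff_continuousAt.2 fun u => (hb u).continuousAt
  have σc : Continuous σ := continuous_iff_continuousAt.2 fun u => (hσ u).continuousAt
  have N1 : ∀ u, |N u| ≤ 1 := fun u => by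
    rw [← sq_le_one_iff_abs_le_one]; nlinarith [hunit u, sq_nonneg (d u)]
  have d1 : ∀ u, |d u| ≤ 1 := fun u => by
    rw [← sq_le_one_iff_abs_le_one]; nlinarith [hunit u, sq_nonneg (N u)]
  obtain ⟨Cd, hCd, bdd⟩ := bd1 A hA d _ hd (by fun_prop) d0
  have mem0 : (0:ℝ) ∈ Set.Icc (-A) A := ⟨by linarith, hA.le⟩
  obtain ⟨Ck, hCk, bdk⟩ : ∃ C, 0 ≤ C ∧ ∀ u ∈ Set.Icc (-A) A, |k u| ≤ C := by
    obtain ⟨C, hC⟩ := (isCompact_Icc (a := -A) (b := A)).exists_bound_of_continuousOn kc.continuousOn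
    exact ⟨C, (norm_nonneg _).trans (hC 0 mem0), hC⟩
  obtain ⟨Cσ, hCσ, bdσ⟩ : ∃ C, 0 ≤ C ∧ ∀ u ∈ Set.Icc (-A) A, |σ u| ≤ C := by
    obtain ⟨C, hC⟩ := (isCompact_Icc (a := -A) (b := A)).exists_bound_of_continuousOn σc.continuousOn
    exact ⟨C, (norm_nonneg _).trans (hC 0 mem0), hC⟩
  set φ : ℝ → ℝ := fun u => k u * d u * σ u + N u * σ1 u with hφ
  have φc : Continuous φ := by rw [hφ]; fun_prop
  obtain ⟨Cφ, hCφ, bdφ⟩ : ∃ C, 0 ≤ C ∧ ∀ u ∈ Set.Icc (-A) A, |φ u| ≤ C := by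
    obtain ⟨C, hC⟩ := (isCompact_Icc (a := -A) (b := A)).exists_bound_of_continuousOn φc.continuousOn
    exact ⟨C, (norm_nonneg _).trans (hC 0 mem0), hC⟩
  obtain ⟨Cb, hCb, bdb⟩ := bd1 A hA b _ hb (by fun_prop) b0
  have bda : ∀ u ∈ Set.Icc (-A) A, |a u| ≤ (Ck * Cb) * u ^ 2 :=
    bd2 A a _ ha _ (by positivity) (fun u hu => by
      rw [abs_mul, mul_assoc]
      exact mul_le_mul (bdk u hu) (bdb u hu) (abs_nonneg _) hCk) a0
  set Ca := Ck * Cb with hCa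
  have hCa0 : 0 ≤ Ca := by positivity
  have bdg : ∀ u ∈ Set.Icc (-A) A, |N u * a u + d u * b u| ≤ Cd * u ^ 2 := by
    refine bd2 A (fun u => N u * a u + d u * b u) (fun u => - d u) (fun u => ?_) Cd hCd
      (fun u hu => by rw [abs_neg]; exact bdd u hu) (by simp [a0, b0])
    exact (((hN u).mul (ha u)).add ((hd u).mul (hb u))).congr_deriv (by ring)
  obtain ⟨c, hc, hlow⟩ := lowb A hA a b k ha hb a0 b0 hρ
  set h₀ := c / (4 * (Cd + 1)) with hh₀
  have h₀pos : 0 < h₀ := by positivity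
  set c' := min 1 (c / 2) with hc'
  have c'pos : 0 < c' := by rw [hc']; positivity
  have low : ∀ h, |h| < h₀ → ∀ u ∈ Set.Icc (-A) A,
      c' * (h ^ 2 + u ^ 2) ≤ (a u + h * N u) ^ 2 + (b u + h * d u) ^ 2 := by
    intro h hh u hu
    have e1 : (a u + h * N u) ^ 2 + (b u + h * d u) ^ 2
        = (a u ^ 2 + b u ^ 2) + h ^ 2 + 2 * (h * (N u * a u + d u * b u)) := by
      linear_combination h ^ 2 * hunit u
    have e2 : |h * (N u * a u + d u * b u)| ≤ c / 4 * u ^ 2 := by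
      rw [abs_mul]
      calc _ ≤ h₀ * (Cd * u ^ 2) := by gcongr; exact bdg u hu
        _ ≤ h₀ * ((Cd + 1) * u ^ 2) := by gcongr; linarith
        _ = _ := by rw [hh₀]; field_simp
    have e3 := (abs_le.1 e2).1
    have e4 := hlow u hu
    have m1 : c' ≤ 1 := min_le_left _ _
    have m2 : c' ≤ c / 2 := min_le_right _ _
    have m3 : c' * h ^ 2 ≤ 1 * h ^ 2 := by gcongr
    have m4 : c' * u ^ 2 ≤ c / 2 * u ^ 2 := by gcongr
    rw [e1]; linarith
  set X : ℝ → ℝ → ℝ := fun h u => Xf (a u + h * N u) (b u + h * d u) (d u) (N u) (k u) (σ u) (φ u) with hX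
  set ρ : ℝ → ℝ → ℝ := fun h u => (a u + h * N u) ^ 2 + (b u + h * d u) ^ 2 with hρd
  set E : ℝ → ℝ → ℝ := fun h u => Ef (a u + h * N u) (b u + h * d u) (d u) (N u) (σ u) with hE
  have ρnn : ∀ h u, 0 ≤ ρ h u := fun h u => by rw [hρd]; positivity
  obtain ⟨M, hM0, bdX⟩ : ∃ M, 0 ≤ M ∧ ∀ h, |h| < h₀ → ∀ u ∈ Set.Icc (-A) A, |X h u| ≤ M := by
    refine ⟨Cφ + 2 * Ck * Cσ + 4 * (Cd ^ 2 / c' + 1) * Cσ, by positivity, fun h hh u hu => ?_⟩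
    refine (Xf_bound _ _ _ _ _ _ _ (Cd ^ 2 / c') (N1 u) (by positivity) ?_).trans ?_
    · have h1 : d u ^ 2 ≤ Cd ^ 2 * u ^ 2 := by
        rw [← sq_abs (d u), ← sq_abs u, ← mul_pow]
        gcongr; exact bdd u hu
      have h2 := low h hh u hu
      calc d u ^ 2 ≤ Cd ^ 2 * u ^ 2 := h1
        _ ≤ Cd ^ 2 / c' * (c' * (h ^ 2 + u ^ 2)) := by
          field_simp
          nlinarith [mul_nonneg (sq_nonneg Cd) (sq_nonneg h)]
        _ ≤ _ := by gcongr
    · have := bdφ u hu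
      have := bdk u hu
      have := bdσ u hu
      gcongr
  have ρpos : ∀ h, |h| < h₀ → ∀ u ∈ Set.Icc (-A) A, (h ≠ 0 ∨ u ≠ 0) → 0 < ρ h u := by
    intro h hh u hu hor
    have h2 := low h hh u hu
    have : 0 < h ^ 2 + u ^ 2 := by
      rcases hor with h' | h' <;> positivity
    exact lt_of_lt_of_le (by positivity) h2
  have bdaρ : ∀ h, |h| < h₀ → ∀ u ∈ Set.Icc (-A) A, |a u / ρ h u| ≤ Ca / c' := by
    intro h hh u hu
    have h2 := low h hh u hu
    rw [abs_div, abs_of_nonneg (ρnn h u)]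
    apply div_le_of_le_mul₀ (ρnn h u) (by positivity)
    calc |a u| ≤ Ca * u ^ 2 := bda u hu
      _ ≤ Ca / c' * (c' * (h ^ 2 + u ^ 2)) := by
          field_simp
          nlinarith [mul_nonneg hCa0 (sq_nonneg h)]
      _ ≤ _ := by gcongr
  have ioc : Set.uIoc (-A) A = Set.Ioc (-A) A := Set.uIoc_of_le (by linarith)
  have ibnd : ∀ (f : ℝ → ℝ) (C : ℝ), Measurable f → (∀ u ∈ Set.Icc (-A) A, |f u| ≤ C) →
      IntervalIntegrable f volume (-A) A := by
    intro f C hf hC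
    rw [intervalIntegrable_iff]
    refine Measure.integrableOn_of_bounded (M := C) (by simp) hf.aestronglyMeasurable ?_
    rw [ae_restrict_iff' measurableSet_uIoc]
    refine Eventually.of_forall fun u hu => ?_
    rw [ioc] at hu
    exact hC u ⟨hu.1.le, hu.2⟩
  have Xm : ∀ h, Measurable (X h) := fun h => by
    simp only [hX]; unfold Xf; fun_prop
  have ρm : ∀ h, Measurable (ρ h) := fun h => by simp only [hρd]; fun_prop
  have Em : ∀ h, Measurable (E h) := fun h => by simp only [hE]; unfold Ef; fun_prop
  have bdR : ∀ h, |h| < h₀ → ∀ u ∈ Set.Icc (-A) A, |a u * X h u / ρ h u| ≤ Ca / c' * M := by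
    intro h hh u hu
    rw [mul_div_right_comm, abs_mul]
    exact mul_le_mul (bdaρ h hh u hu) (bdX h hh u hu) (abs_nonneg _) (by positivity)
  have bdS : ∀ h, |h| < h₀ → ∀ u ∈ Set.Icc (-A) A, |N u * X h u / ρ h u| ≤ M / ρ h u := by
    intro h hh u hu
    rw [abs_div, abs_mul, abs_of_nonneg (ρnn h u)]
    have h1 := bdX h hh u hu
    have h2 := N1 u
    have h3 : |N u| * |X h u| ≤ 1 * M := by gcongr
    have := ρnn h u
    rw [one_mul] at h3
    gcongr
  have Rint : ∀ h, |h| < h₀ → IntervalIntegrable (fun u => a u * X h u / ρ h u) volume (-A) A :=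
    fun h hh => ibnd _ _ ((ac.measurable.mul (Xm h)).div (ρm h)) (bdR h hh)
  have ρh : ∀ h, |h| < h₀ → h ≠ 0 → ∀ u ∈ Set.Icc (-A) A, 1 / ρ h u ≤ 1 / (c' * h ^ 2) := by
    intro h hh h' u hu
    have := low h hh u hu
    apply one_div_le_one_div_of_le (by positivity)
    refine le_trans ?_ this
    nlinarith [mul_nonneg c'pos.le (sq_nonneg u)]
  have Sint : ∀ h, |h| < h₀ → IntervalIntegrable (fun u => h * (N u * X h u / ρ h u)) volume (-A) A := by
    intro h hh
    by_cases h' : h = 0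
    · simp [h']
    · refine (ibnd _ (M * (1 / (c' * h ^ 2))) ((Nc.measurable.mul (Xm h)).div (ρm h)) fun u hu => ?_).const_mul h
      refine (bdS h hh u hu).trans ?_
      rw [div_eq_mul_one_div]
      have := ρh h hh h' u hu
      gcongr
  have E0 : ∀ u ∈ Set.Icc (-A) A, |E 0 u| ≤ 7 * Cσ * (Ca / c') ^ 2 := by
    intro u hu
    have h1 := bdaρ 0 (by simpa using h₀pos) u hu
    refine (Ef_bound _ _ _ _ _ (N1 u) (d1 u)).trans ?_
    have h2 : (a u + 0 * N u) ^ 2 / ((a u + 0 * N u) ^ 2 + (b u + 0 * d u) ^ 2) ^ 2 = |a u / ρ 0 u| ^ 2 := by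
      rw [sq_abs, div_pow]; simp [hρd]
    rw [h2]
    have := bdσ u hu
    gcongr
  have Eint : ∀ h, |h| < h₀ → IntervalIntegrable (E h) volume (-A) A := by
    intro h hh
    by_cases h' : h = 0
    · rw [h']; exact ibnd _ _ (Em 0) E0
    · refine ibnd _ (7 * Cσ * (1 / (c' * h ^ 2))) (Em h) fun u hu => ?_
      refine (Ef_bound _ _ _ _ _ (N1 u) (d1 u)).trans ?_
      have hp := ρpos h hh u hu (Or.inl h')
      have h2 : (a u + h * N u) ^ 2 / ((a u + h * N u) ^ 2 + (b u + h * d u) ^ 2) ^ 2 ≤ 1 / ρ h u := by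
        simp only [hρd] at hp ⊢
        rw [div_le_div_iff₀ (by positivity) hp]
        nlinarith [mul_nonneg hp.le (sq_nonneg (b u + h * d u))]
      have := bdσ u hu
      have := h2.trans (ρh h hh h' u hu)
      gcongr
  have ibp : ∀ h, |h| < h₀ → ∫ u in (-A)..A, E h u =
      (∫ u in (-A)..A, a u * X h u / ρ h u) + ∫ u in (-A)..A, h * (N u * X h u / ρ h u) := by
    intro h hh
    have hder : ∀ u ∈ Set.Icc (-A) A, (h ≠ 0 ∨ u ≠ 0) → HasDerivAt
        (fun u => N u * σ u * ((a u + h * N u) ^ 2 * (b u + h * d u) / ((a u + h * N u) ^ 2 + (b u + h * d u) ^ 2) ^ 2))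
        (a u * X h u / ρ h u + h * (N u * X h u / ρ h u) - E h u) u := by
      intro u hu hor
      have := W_deriv (fun u => a u + h * N u) (fun u => b u + h * d u) d N k σ (σ1 u) u (hN u)
        (((ha u).add ((hN u).const_mul h)).congr_deriv (by ring))
        (((hb u).add ((hd u).const_mul h)).congr_deriv (by ring)) (hσ u) (ρpos h hh u hu hor).ne'
      refine this.congr_deriv ?_
      simp only [hX, hE, hρd, hφ]
      ring
    have hcont : ContinuousOn (fun u => N u * σ u * ((a u + h * N u) ^ 2 * (b u + h * d u) / 
        ((a u + h * N u) ^ 2 + (b u + h * d u) ^ 2) ^ 2)) (Set.Icc (-A) A) := by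
      intro u hu
      by_cases hor : h ≠ 0 ∨ u ≠ 0
      · exact (hder u hu hor).continuousAt.continuousWithinAt
      · push Not at hor
        obtain ⟨rfl, rfl⟩ := hor
        apply ContinuousWithinAt.mul (Nc.mul σc).continuousWithinAt
        unfold ContinuousWithinAt
        have hz : (a 0 + 0 * N 0) ^ 2 * (b 0 + 0 * d 0) / ((a 0 + 0 * N 0) ^ 2 + (b 0 + 0 * d 0) ^ 2) ^ 2 = 0 := by
          simp [b0]
        simp only [hz]
        apply squeeze_zero_norm' (a := fun u => (Ca / c') ^ 2 * |b u|)
        · filter_upwards [self_mem_nhdsWithin] with u hu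
          have h1 := bdaρ 0 hh u hu
          have h2 : (a u + 0 * N u) ^ 2 * (b u + 0 * d u) / ((a u + 0 * N u) ^ 2 + (b u + 0 * d u) ^ 2) ^ 2 
            = |a u / ρ 0 u| ^ 2 * b u := by
            rw [sq_abs, div_pow]; simp [hρd]; ring
          rw [h2, Real.norm_eq_abs, abs_mul, abs_of_nonneg (sq_nonneg _)]
          gcongr
        · have : Continuous (fun u => (Ca / c') ^ 2 * |b u|) := by fun_prop
          have := (this.tendsto 0).mono_left (nhdsWithin_le_nhds (s := Set.Icc (-A) A))
          simpa [b0] using this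
    have := integral_eq_of_hasDerivAt_off_countable_of_le _ _ (by linarith : -A ≤ A) 
      (Set.countable_singleton (0:ℝ)) hcont (fun u hu => hder u ⟨hu.1.1.le, hu.1.2.le⟩ (Or.inr hu.2))
      (((Rint h hh).add (Sint h hh)).sub (Eint h hh))
    rw [intervalIntegral.integral_sub ((Rint h hh).add (Sint h hh)) (Eint h hh),
      intervalIntegral.integral_add (Rint h hh) (Sint h hh)] at this
    simp only [pN, pd, pa, pb, pσ, sub_self] at this
    linarith
  refine ⟨h₀, h₀pos, fun h hp hh u hu => ?_, ⟨7 * Cσ * (Ca / c') ^ 2, fun u hu => ?_⟩, fun e he => ?_⟩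
  · exact (ρpos h hh u hu (Or.inl (abs_pos.1 hp))).ne'
  · simpa [hE] using E0 u hu
  have eabs : |e| = 1 := by rw [← Real.sqrt_sq_eq_abs, he, Real.sqrt_one]
  have hsmall : ∀ᶠ η in 𝓝[>] (0:ℝ), 0 < η ∧ |e * η| < h₀ := by
    filter_upwards [Ioo_mem_nhdsGT h₀pos] with η hη
    refine ⟨hη.1, ?_⟩
    rw [abs_mul, eabs, one_mul, abs_of_pos hη.1]; exact hη.2
  have limeη : Tendsto (fun η => e * η) (𝓝[>] (0:ℝ)) (𝓝 0) := by
    have : Continuous (fun η => e * η) := by fun_prop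
    simpa using (this.tendsto 0).mono_left (nhdsWithin_le_nhds (s := Set.Ioi 0))
  have L1 : Tendsto (fun η => ∫ u in (-A)..A, a u * X (e * η) u / ρ (e * η) u) (𝓝[>] (0:ℝ))
      (𝓝 (∫ u in (-A)..A, a u * X 0 u / ρ 0 u)) := by
    apply intervalIntegral.tendsto_integral_filter_of_dominated_convergence (fun _ => Ca / c' * M)
    · exact Eventually.of_forall fun η => ((ac.measurable.mul (Xm _)).div (ρm _)).aestronglyMeasurable
    · filter_upwards [hsmall] with η hη
      refine Eventually.of_forall fun u hu => ?_
      rw [ioc] at hu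
      exact bdR _ hη.2 u ⟨hu.1.le, hu.2⟩
    · simp
    · have : ∀ᵐ u : ℝ, u ≠ 0 := by simp [ae_iff]
      filter_upwards [this] with u hu0 hu
      rw [ioc] at hu
      have hp := (ρpos 0 (by simpa using h₀pos) u ⟨hu.1.le, hu.2⟩ (Or.inr hu0)).ne'
      have hc : ContinuousAt (fun h => a u * X h u / ρ h u) 0 := by
        simp only [hρd] at hp
        simp only [hX, hρd, Xf]
        have hp2 := pow_ne_zero 2 hp
        have c1 : ContinuousAt (fun h => (a u + h * N u) ^ 2 + (b u + h * d u) ^ 2) 0 := by fun_prop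
        refine ContinuousAt.div (ContinuousAt.mul (by fun_prop) (ContinuousAt.add (ContinuousAt.add 
          (ContinuousAt.mul (ContinuousAt.div (by fun_prop) c1 hp) (by fun_prop))
          (ContinuousAt.div (by fun_prop) c1 hp)) 
          (ContinuousAt.div (by fun_prop) (c1.pow 2) hp2))) c1 hp
      exact hc.tendsto.comp limeη
  have L2 : Tendsto (fun η => ∫ v : ℝ, Set.indicator (Set.Ioc (-A / η) (A / η)) 
      (fun v => η ^ 2 * (N (η * v) * X (e * η) (η * v) / ρ (e * η) (η * v))) v) (𝓝[>] (0:ℝ))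
      (𝓝 (π * k 0 * σ 0)) := by
    rw [← q_integral e (k 0) (σ 0) (σ1 0) he]
    apply tendsto_integral_filter_of_dominated_convergence (fun v => M / c' * (1 + v ^ 2)⁻¹)
    · refine Eventually.of_forall fun η => ?_
      refine (Measurable.indicator ?_ measurableSet_Ioc).aestronglyMeasurable
      have m1 : Measurable (fun v : ℝ => η * v) := by fun_prop
      exact (((Nc.measurable.mul (Xm (e * η))).div (ρm (e * η))).comp m1).const_mul _
    · filter_upwards [hsmall] with η hη
      refine Eventually.of_forall fun v => ?_
      by_cases hv : v ∈ Set.Ioc (-A / η) (A / η)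
      · rw [Set.indicator_of_mem hv]
        have hmem : η * v ∈ Set.Icc (-A) A := by
          obtain ⟨h1, h2⟩ := hv
          rw [div_lt_iff₀ hη.1] at h1
          rw [le_div_iff₀ hη.1] at h2
          constructor <;> linarith
        have h1 := bdS _ hη.2 _ hmem
        have h2 := low _ hη.2 _ hmem
        rw [Real.norm_eq_abs, abs_mul, abs_of_nonneg (sq_nonneg η)]
        have e1 : (e * η) ^ 2 + (η * v) ^ 2 = η ^ 2 * (1 + v ^ 2) := by
          linear_combination η ^ 2 * he
        rw [e1] at h2
        have hη1 := hη.1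
        calc _ ≤ η ^ 2 * (M / ρ (e * η) (η * v)) := by gcongr
          _ ≤ η ^ 2 * (M / (c' * (η ^ 2 * (1 + v ^ 2)))) := by gcongr; 
          _ = _ := by field_simp
      · rw [Set.indicator_of_notMem hv, norm_zero]; positivity
    · exact integrable_inv_one_add_sq.const_mul _
    · refine Eventually.of_forall fun v => ?_
      have lim0 : Tendsto (fun η : ℝ => η * v) (𝓝[>] (0:ℝ)) (𝓝 0) := by
        have : Continuous (fun η : ℝ => η * v) := by fun_prop
        simpa using (this.tendsto 0).mono_left (nhdsWithin_le_nhds (s := Set.Ioi 0))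
      have lc : ∀ f : ℝ → ℝ, Continuous f → Tendsto (fun η => f (η * v)) (𝓝[>] (0:ℝ)) (𝓝 (f 0)) :=
        fun f hf => (hf.tendsto 0).comp lim0
      have ld : ∀ (f : ℝ → ℝ) (f' : ℝ), HasDerivAt f f' 0 → f 0 = 0 → 
          Tendsto (fun η => f (η * v) / η) (𝓝[>] (0:ℝ)) (𝓝 (f' * v)) := by
        intro f f' hf hf0
        have h1 : HasDerivAt (fun η => f (η * v)) (f' * v) 0 := by
          have h2 : HasDerivAt (fun η : ℝ => η * v) v 0 := by
            simpa using (hasDerivAt_id (0:ℝ)).mul_const v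
          have hf' : HasDerivAt f f' (0 * v) := by simpa using hf
          exact hf'.comp 0 h2
        have h3 := h1.tendsto_slope_zero_right
        refine h3.congr fun η => ?_
        simp [hf0]; ring
      have ta := ((ld a _ (ha 0) a0).add ((lc N Nc).const_mul e))
      have tb := ((ld b _ (hb 0) b0).add ((lc d dc).const_mul e))
      have td := ld d _ (hd 0) d0
      simp only [a0, b0, N0, d0, mul_zero, zero_mul, zero_add, add_zero, mul_one, sub_zero] at ta tb td
      have tN := lc N Nc
      have tk := lc k kc
      have tσ := lc σ σc
      have tφ := lc φ φc
      rw [N0] at tN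
      have φ0 : φ 0 = σ1 0 := by simp [hφ, d0, N0]
      rw [φ0] at tφ
      have tρ := (ta.pow 2).add (tb.pow 2)
      have hne : e ^ 2 + (-1 * v) ^ 2 ≠ 0 := by rw [he]; positivity
      have T := (tN.mul (((((ta.mul tb).div tρ hne).mul tφ).add 
        ((((tk.mul tN).mul tσ).mul (((tb.pow 2).const_mul 2).sub (ta.pow 2))).div tρ hne)).add
        ((((((td.const_mul 4).mul tσ).mul (ta.pow 2)).mul tb)).div (tρ.pow 2) (pow_ne_zero 2 hne)))).div 
        tρ hne
      have hev : ∀ᶠ η in 𝓝[>] (0:ℝ), v ∈ Set.Ioc (-A / η) (A / η) := by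
        have : ∀ᶠ η in 𝓝[>] (0:ℝ), η * v ∈ Set.Ioo (-A) A := 
          lim0.eventually (Ioo_mem_nhds (by linarith) hA)
        filter_upwards [this, self_mem_nhdsWithin] with η h1 h2
        have h2 : 0 < η := h2
        constructor
        · rw [div_lt_iff₀ h2]; linarith [h1.1]
        · rw [le_div_iff₀ h2]; linarith [h1.2]
      have T' := T.congr' (f₂ := fun η => Set.indicator (Set.Ioc (-A / η) (A / η)) 
        (fun v => η ^ 2 * (N (η * v) * X (e * η) (η * v) / ρ (e * η) (η * v))) v) (by
          filter_upwards [hev, hsmall] with η h1 h2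
          have hη := h2.1.ne'
          rw [Set.indicator_of_mem h1]
          have hmem : η * v ∈ Set.Icc (-A) A := by
            obtain ⟨h3, h4⟩ := h1
            rw [div_lt_iff₀ h2.1] at h3
            rw [le_div_iff₀ h2.1] at h4
            constructor <;> linarith
          have hp := (ρpos _ h2.2 _ hmem (Or.inl (by
            intro h0; rcases mul_eq_zero.1 h0 with h | h
            · simp [h] at he
            · exact hη h))).ne'
          simp only [hρd] at hp
          simp only [hX, hρd, Xf, Pi.div_apply]
          have s1 : ∀ x y : ℝ, x / η + e * y = (x + e * η * y) / η := fun x y => by field_simp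
          rw [s1, s1]
          generalize a (η * v) + e * η * N (η * v) = aa at *
          generalize b (η * v) + e * η * d (η * v) = bb at *
          have s2 : (aa / η) ^ 2 + (bb / η) ^ 2 = (aa ^ 2 + bb ^ 2) / η ^ 2 := by
            field_simp
          rw [s2]
          generalize aa ^ 2 + bb ^ 2 = R at *
          field_simp)
      convert T' using 2
      unfold Xf
      simp only [neg_one_mul, mul_one, one_mul]
  have L3 : Tendsto (fun η => ∫ u in (-A)..A, (e * η) * (N u * X (e * η) u / ρ (e * η) u)) (𝓝[>] (0:ℝ))
      (𝓝 (e * (π * k 0 * σ 0))) := by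
    refine (L2.const_mul e).congr' ?_
    filter_upwards [hsmall] with η hη
    rw [integral_indicator measurableSet_Ioc, ← intervalIntegral.integral_of_le 
      (by have := hη.1; gcongr; linarith)]
    rw [intervalIntegral.integral_const_mul, intervalIntegral.integral_const_mul]
    have := intervalIntegral.mul_integral_comp_mul_left (a := -A / η) (b := A / η) 
      (f := fun u => N u * X (e * η) u / ρ (e * η) u) (c := η)
    rw [mul_div_cancel₀ _ hη.1.ne', mul_div_cancel₀ _ hη.1.ne'] at this
    rw [← this]; ring
  have hz : ∫ u in (-A)..A, Ef (a u) (b u) (d u) (N u) (σ u) = ∫ u in (-A)..A, a u * X 0 u / ρ 0 u := by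
    have := ibp 0 (by simpa using h₀pos)
    simpa [hE] using this
  rw [hz, add_comm]
  refine (L1.add L3).congr' ?_
  filter_upwards [hsmall] with η hη
  exact (ibp _ hη.2).symm

lemma K_scalar (N d a b c R σ : ℝ) (hR : R = a ^ 2 + b ^ 2) (hc : c = N * a + d * b) :
    ((-(3 / (4 * π)) * N / R + 3 / (2 * π) * a * c / R ^ 2 + 3 / (2 * π) * a ^ 2 * N / R ^ 2
      - 2 / π * a ^ 3 * c / R ^ 3)
    + 3 * (1 / (2 * π) * N * b ^ 2 / R ^ 2 + 1 / π * a * b * d / R ^ 2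
        - 2 / π * a * b ^ 2 * c / R ^ 3 - 1 / (4 * π) * N / R
        + 1 / (2 * π) * a * c / R ^ 2)) * σ = π⁻¹ * Ef a b d N σ := by
  unfold Ef
  rw [← hR]
  have hpi := Real.pi_ne_zero
  by_cases h : R = 0
  · simp [h]
  field_simp
  subst hc
  rw [hR]
  ring

/-- First-order data of the curve in the moving frame. -/
def fN (γ : ℝ → ℝ × ℝ) (t u : ℝ) : ℝ := dot2 (nor γ t) (nor γ (t + u))
/-- See `fN`. -/
def fd (γ : ℝ → ℝ × ℝ) (t u : ℝ) : ℝ := dot2 (nor γ t) (tang γ (t + u))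
/-- See `fN`. -/
def fa (γ : ℝ → ℝ × ℝ) (t u : ℝ) : ℝ := dot2 (γ t - γ (t + u)) (nor γ (t + u))
/-- See `fN`. -/
def fb (γ : ℝ → ℝ × ℝ) (t u : ℝ) : ℝ := dot2 (γ t - γ (t + u)) (tang γ (t + u))

lemma K_eq (γ : ℝ → ℝ × ℝ) (harc : ∀ s, dot2 (deriv γ s) (deriv γ s) = 1) (t h u σ : ℝ) :
    K21clamped γ t (γ t + h • nor γ t) (t + u) * σ =
      π⁻¹ * Ef (fa γ t u + h * fN γ t u) (fb γ t u + h * fd γ t u) (fd γ t u) (fN γ t u) σ := by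
  have h1 := harc (t + u)
  have ea : dot2 (γ t + h • nor γ t - γ (t + u)) (nor γ (t + u)) = fa γ t u + h * fN γ t u := by
    simp only [fa, fN, dot2, Prod.fst_add, Prod.snd_add, Prod.fst_sub, Prod.snd_sub, Prod.smul_fst,
      Prod.smul_snd, smul_eq_mul]
    ring
  have eb : dot2 (γ t + h • nor γ t - γ (t + u)) (tang γ (t + u)) = fb γ t u + h * fd γ t u := by
    simp only [fb, fd, dot2, Prod.fst_add, Prod.snd_add, Prod.fst_sub, Prod.snd_sub, Prod.smul_fst,
      Prod.smul_snd, smul_eq_mul]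
    ring
  rw [← ea, ← eb]
  refine K_scalar (fN γ t u) (fd γ t u) _ _ _ _ σ ?_ ?_
  · simp only [dot2, nor, tang] at h1 ⊢
    generalize γ t + _ - γ (t + u) = r
    linear_combination (-(r.1 ^ 2 + r.2 ^ 2)) * h1
  · simp only [fN, fd, dot2, nor, tang] at h1 ⊢
    generalize γ t + _ - γ (t + u) = r
    linear_combination (-(r.1 * (deriv γ t).2 - r.2 * (deriv γ t).1)) * h1

theorem stmt15 (L : ℝ) (hL : 0 < L) (γ : ℝ → ℝ × ℝ)
    (hγ : ContDiff ℝ (⊤ : ℕ∞) γ)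
    (hper : ∀ s, γ (s + L) = γ s)
    (hinj : Set.InjOn γ (Set.Ico 0 L))
    (harc : ∀ s, dot2 (deriv γ s) (deriv γ s) = 1)
    (σ : ℝ → ℝ) (hσ : ContDiff ℝ (⊤ : ℕ∞) σ) (hσper : ∀ s, σ (s + L) = σ s)
    (t : ℝ) :
    ∃ h₀ > (0 : ℝ),
      (∀ h : ℝ, 0 < |h| → |h| < h₀ → ∀ s : ℝ, γ t + h • nor γ t ≠ γ s) ∧
      (∃ M : ℝ, ∀ s ∈ Set.Icc (0 : ℝ) L, |K21clamped γ t (γ t) s * σ s| ≤ M) ∧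
      Tendsto
        (fun h : ℝ => ∫ s in (0 : ℝ)..L, K21clamped γ t (γ t + h • nor γ t) s * σ s)
        (𝓝[>] (0 : ℝ))
        (𝓝 (curv γ t * σ t + ∫ s in (0 : ℝ)..L, K21clamped γ t (γ t) s * σ s)) ∧
      Tendsto
        (fun h : ℝ => ∫ s in (0 : ℝ)..L, K21clamped γ t (γ t + h • nor γ t) s * σ s)
        (𝓝[<] (0 : ℝ))
        (𝓝 (-(curv γ t) * σ t + ∫ s in (0 : ℝ)..L, K21clamped γ t (γ t) s * σ s)) := by
  have hγ1 : ContDiff ℝ (⊤ : ℕ∞) (deriv γ) := (contDiff_infty_iff_deriv.1 hγ).2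
  have hγ2 : ContDiff ℝ (⊤ : ℕ∞) (deriv (deriv γ)) := (contDiff_infty_iff_deriv.1 hγ1).2
  have hσ1 : ContDiff ℝ (⊤ : ℕ∞) (deriv σ) := (contDiff_infty_iff_deriv.1 hσ).2
  have D0 : ∀ s, HasDerivAt γ (deriv γ s) s := fun s =>
    ((contDiff_infty_iff_deriv.1 hγ).1 s).hasDerivAt
  have D1 : ∀ s, HasDerivAt (deriv γ) (deriv (deriv γ) s) s := fun s =>
    ((contDiff_infty_iff_deriv.1 hγ1).1 s).hasDerivAt
  have Dσ : ∀ s, HasDerivAt σ (deriv σ s) s := fun s =>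
    ((contDiff_infty_iff_deriv.1 hσ).1 s).hasDerivAt
  have perγ : Function.Periodic γ L := hper
  have perd : Function.Periodic (deriv γ) L := by
    intro s
    have : deriv (fun x => γ (x + L)) s = deriv γ s := by
      congr 1; funext x; exact hper x
    rwa [deriv_comp_add_const] at this
  have P : ∀ s, HasDerivAt (fun s => (γ s).1) (deriv γ s).1 s := fun s =>
    (D0 s).fst
  have Q : ∀ s, HasDerivAt (fun s => (γ s).2) (deriv γ s).2 s := fun s =>
    (D0 s).snd
  have P1' : ∀ s, HasDerivAt (fun s => (deriv γ s).1) (deriv (deriv γ) s).1 s := fun s =>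
    (D1 s).fst
  have Q1' : ∀ s, HasDerivAt (fun s => (deriv γ s).2) (deriv (deriv γ) s).2 s := fun s =>
    (D1 s).snd
  have orth : ∀ s, (deriv γ s).1 * (deriv (deriv γ) s).1 + (deriv γ s).2 * (deriv (deriv γ) s).2 = 0 := by
    intro s
    have h1 := ((P1' s).mul (P1' s)).add ((Q1' s).mul (Q1' s))
    have h2 : ((fun s => (deriv γ s).1) * (fun s => (deriv γ s).1)) + 
        ((fun s => (deriv γ s).2) * (fun s => (deriv γ s).2)) = fun _ => (1:ℝ) := by
      funext s; exact harc s
    rw [h2] at h1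
    have := h1.unique (hasDerivAt_const s (1:ℝ))
    linarith
  have P1 : ∀ s, HasDerivAt (fun s => (deriv γ s).1) (-(curv γ s * (deriv γ s).2)) s := by
    intro s
    refine (P1' s).congr_deriv ?_
    have h1 := harc s
    have h2 := orth s
    simp only [curv, dot2, nor] at h1 ⊢
    linear_combination (-(deriv (deriv γ) s).1) * h1 + (deriv γ s).1 * h2
  have Q1 : ∀ s, HasDerivAt (fun s => (deriv γ s).2) (curv γ s * (deriv γ s).1) s := by
    intro s
    refine (Q1' s).congr_deriv ?_
    have h1 := harc s
    have h2 := orth s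
    simp only [curv, dot2, nor] at h1 ⊢
    linear_combination (-(deriv (deriv γ) s).2) * h1 + (deriv γ s).2 * h2
  have shift : ∀ (f : ℝ → ℝ) (f' u : ℝ), HasDerivAt f f' (t + u) → HasDerivAt (fun u => f (t + u)) f' u := by
    intro f f' u hf
    exact hf.comp_const_add t u
  have curvc : Continuous (curv γ) := by
    have c1 := hγ1.continuous
    have c2 := hγ2.continuous
    unfold curv dot2 nor
    fun_prop
  have inj : ∀ x y : ℝ, γ x = γ y → ∃ n : ℤ, x - y = n * L := by
    intro x y hxy
    have e : ∀ x, γ (toIcoMod hL 0 x) = γ x := fun x => by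
      rw [toIcoMod]; exact perγ.sub_zsmul_eq _
    have m : ∀ x, toIcoMod hL 0 x ∈ Set.Ico 0 L := fun x => by
      simpa using toIcoMod_mem_Ico hL 0 x
    have h := hinj (m x) (m y) (by rw [e, e, hxy])
    simp only [toIcoMod, zsmul_eq_mul] at h
    refine ⟨toIcoDiv hL 0 x - toIcoDiv hL 0 y, ?_⟩
    push_cast
    linarith
  have hA : 0 < L / 2 := by positivity
  have sq_eq : ∀ u, fa γ t u ^ 2 + fb γ t u ^ 2 = dot2 (γ t - γ (t + u)) (γ t - γ (t + u)) := by
    intro u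
    have h1 := harc (t + u)
    simp only [fa, fb, dot2, nor, tang] at h1 ⊢
    generalize γ t - γ (t + u) = r
    linear_combination ((r.1 ^ 2 + r.2 ^ 2)) * h1
  have plus : t + L / 2 = t + -(L / 2) + L := by ring
  have pg : γ (t + -(L / 2)) = γ (t + L / 2) := by rw [plus, hper]
  have pg1 : deriv γ (t + -(L / 2)) = deriv γ (t + L / 2) := by rw [plus, perd]
  obtain ⟨h₀, h₀pos, H1, ⟨M, H2⟩, H3⟩ := main_abs (L / 2) hA (fN γ t) (fd γ t) (fa γ t) (fb γ t)
    (fun u => curv γ (t + u)) (fun u => σ (t + u)) (fun u => deriv σ (t + u))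
    (fun u => by
      have hp := shift _ _ u (P1 (t + u))
      have hq := shift _ _ u (Q1 (t + u))
      refine ((hq.const_mul (deriv γ t).2).add ((hp.neg).const_mul (-(deriv γ t).1))).congr_deriv ?_
      simp only [fd, dot2, nor, tang]; ring)
    (fun u => by
      have hp := shift _ _ u (P1 (t + u))
      have hq := shift _ _ u (Q1 (t + u))
      refine ((hp.const_mul (deriv γ t).2).add ((hq).const_mul (-(deriv γ t).1))).congr_deriv ?_
      simp only [fN, dot2, nor]; ring)
    (fun u => by
      have hp := shift _ _ u (P1 (t + u))
      have hq := shift _ _ u (Q1 (t + u))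
      have hx := (shift _ _ u (P (t + u))).const_sub (γ t).1
      have hy := (shift _ _ u (Q (t + u))).const_sub (γ t).2
      refine ((hx.mul hq).add (hy.mul hp.neg)).congr_deriv ?_
      simp only [fb, dot2, tang, Prod.fst_sub, Prod.snd_sub, Pi.neg_apply]; ring)
    (fun u => by
      have hp := shift _ _ u (P1 (t + u))
      have hq := shift _ _ u (Q1 (t + u))
      have hx := (shift _ _ u (P (t + u))).const_sub (γ t).1
      have hy := (shift _ _ u (Q (t + u))).const_sub (γ t).2
      refine ((hx.mul hp).add (hy.mul hq)).congr_deriv ?_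
      have h1 := harc (t + u)
      simp only [fa, dot2, nor, Prod.fst_sub, Prod.snd_sub] at h1 ⊢
      linear_combination -h1)
    (fun u => shift _ _ u (Dσ (t + u)))
    (curvc.comp (by fun_prop)) (hσ1.continuous.comp (by fun_prop))
    (by have h1 := harc t
        simp only [fN, dot2, nor, add_zero] at h1 ⊢; linarith)
    (by simp only [fd, dot2, nor, tang, add_zero]; ring)
    (by simp [fa, dot2]) (by simp [fb, dot2])
    (fun u => by
      have h1 := harc t
      have h2 := harc (t + u)
      simp only [fN, fd, dot2, nor, tang] at h1 h2 ⊢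
      linear_combination (((deriv γ t).1 ^ 2 + (deriv γ t).2 ^ 2)) * h2 + h1)
    (fun u hu hu0 => by
      rw [sq_eq]
      intro h0
      have e1 : γ t = γ (t + u) := by
        simp only [dot2, Prod.fst_sub, Prod.snd_sub] at h0
        have z1 : (γ t).1 - (γ (t + u)).1 = 0 := by nlinarith [sq_nonneg ((γ t).1 - (γ (t + u)).1), sq_nonneg ((γ t).2 - (γ (t + u)).2)]
        have z2 : (γ t).2 - (γ (t + u)).2 = 0 := by nlinarith [sq_nonneg ((γ t).1 - (γ (t + u)).1), sq_nonneg ((γ t).2 - (γ (t + u)).2)]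
        exact Prod.ext (by linarith) (by linarith)
      obtain ⟨n, hn⟩ := inj _ _ e1.symm
      have hn' : u = n * L := by linarith
      have b1 : (n : ℝ) < 1 := by
        by_contra hcon
        push Not at hcon
        nlinarith [hu.2]
      have b2 : (-1 : ℝ) < n := by
        by_contra hcon
        push Not at hcon
        nlinarith [hu.1]
      have b1' : n < 1 := by exact_mod_cast b1
      have b2' : -1 < n := by exact_mod_cast b2
      have : n = 0 := by omega
      exact hu0 (by rw [hn', this]; simp))
    (by simp only [fN, nor, pg1]) (by simp only [fd, tang, pg1])
    (by simp only [fa, nor, pg1, pg]) (by simp only [fb, tang, pg1, pg])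
    (by rw [plus, hσper])
  have perK : ∀ x, Function.Periodic (fun s => K21clamped γ t x s * σ s) L := by
    intro x s
    simp only [K21clamped, nor, tang, perγ s, perd s, hσper s]
  have K0 : ∀ u, K21clamped γ t (γ t) (t + u) * σ (t + u) =
      π⁻¹ * Ef (fa γ t u) (fb γ t u) (fd γ t u) (fN γ t u) (σ (t + u)) := by
    intro u
    have := K_eq γ harc t 0 u (σ (t + u))
    simpa using this
  have hint : ∀ x, ∫ s in (0:ℝ)..L, K21clamped γ t x s * σ s = 
      ∫ u in (-(L / 2))..(L / 2), K21clamped γ t x (t + u) * σ (t + u) := by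
    intro x
    have h1 := (perK x).intervalIntegral_add_eq 0 (t + -(L / 2))
    rw [zero_add, ← plus] at h1
    rw [h1, intervalIntegral.integral_comp_add_left (fun s => K21clamped γ t x s * σ s)]
  have T : ∀ e : ℝ, e ^ 2 = 1 → Tendsto
      (fun η : ℝ => ∫ s in (0 : ℝ)..L, K21clamped γ t (γ t + (e * η) • nor γ t) s * σ s)
      (𝓝[>] (0 : ℝ))
      (𝓝 (e * (curv γ t * σ t) + ∫ s in (0 : ℝ)..L, K21clamped γ t (γ t) s * σ s)) := by
    intro e he
    have h1 := (H3 e he).const_mul π⁻¹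
    have h2 : π⁻¹ * (e * (π * curv γ (t + 0) * σ (t + 0)) + ∫ u in (-(L / 2))..(L / 2), 
        Ef (fa γ t u) (fb γ t u) (fd γ t u) (fN γ t u) (σ (t + u))) = 
        e * (curv γ t * σ t) + ∫ s in (0 : ℝ)..L, K21clamped γ t (γ t) s * σ s := by
      rw [hint, add_zero]
      simp only [K0]
      rw [intervalIntegral.integral_const_mul]
      have := Real.pi_ne_zero
      field_simp
    rw [h2] at h1
    refine h1.congr fun η => ?_
    rw [hint]
    simp only [K_eq γ harc]
    rw [intervalIntegral.integral_const_mul]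
  refine ⟨h₀, h₀pos, ?_, ⟨π⁻¹ * M, ?_⟩, ?_, ?_⟩
  · intro h hp hh s hs
    obtain ⟨y, hy, hsy⟩ := perγ.exists_mem_Ico hL s (t + -(L / 2))
    rw [← plus] at hy
    have hm := H1 h hp hh (y - t) ⟨by linarith [hy.1], by linarith [hy.2]⟩
    apply hm
    have e0 : γ t + h • nor γ t - γ (t + (y - t)) = 0 := by
      rw [add_sub_cancel, ← hsy, hs, sub_self]
    have ea : dot2 (γ t + h • nor γ t - γ (t + (y - t))) (nor γ (t + (y - t))) 
        = fa γ t (y - t) + h * fN γ t (y - t) := by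
      simp only [fa, fN, dot2, Prod.fst_add, Prod.snd_add, Prod.fst_sub, Prod.snd_sub, Prod.smul_fst,
        Prod.smul_snd, smul_eq_mul]
      ring
    have eb : dot2 (γ t + h • nor γ t - γ (t + (y - t))) (tang γ (t + (y - t))) 
        = fb γ t (y - t) + h * fd γ t (y - t) := by
      simp only [fb, fd, dot2, Prod.fst_add, Prod.snd_add, Prod.fst_sub, Prod.snd_sub, Prod.smul_fst,
        Prod.smul_snd, smul_eq_mul]
      ring
    rw [← ea, ← eb, e0]
    simp [dot2]
  · intro s _
    obtain ⟨y, hy, hsy⟩ := (perK (γ t)).exists_mem_Ico hL s (t + -(L / 2))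
    rw [← plus] at hy
    rw [hsy]
    have hm := H2 (y - t) ⟨by linarith [hy.1], by linarith [hy.2]⟩
    have := K0 (y - t)
    rw [add_sub_cancel] at this hm
    rw [this, abs_mul, abs_of_pos (inv_pos.2 Real.pi_pos)]
    have := Real.pi_pos
    gcongr
  · simpa using T 1 (by norm_num)
  · have hneg : Tendsto (fun h : ℝ => -h) (𝓝[<] (0:ℝ)) (𝓝[>] (0:ℝ)) := by
      simpa using tendsto_neg_nhdsLT (a := (0:ℝ))
    have := (T (-1) (by norm_num)).comp hneg
    simpa [Function.comp_def] using this
end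
end

section
/- (Jump relation for the normal derivative of the clamped-plate layer potential K₂, biharmonic part.) Let σ : ℝ → ℝ be infinitely differentiable with σ(s+L) = σ(s) for all s, and fix t ∈ ℝ. Define K(x, γ(s)) = (1/(2π))·[(r·τ(s))(τ(s)·n(t)) − (r·n(s))(n(s)·n(t))]/‖r‖² + (1/(2π))·(r·n(t))·[(r·n(s))² − (r·τ(s))²]/‖r‖⁴ with r = x − γ(s) (this kernel equals −G^B_{n_x n_y n_y} + G^B_{n_x τ_y τ_y} with x-derivative in the direction n(t)). Then there is h₀ > 0 such that for 0 < |h| < h₀ the point γ(t) + h·n(t) does not lie on the curve, the function s ↦ K(γ(t), γ(s))·σ(s) is bounded on [0, L] with Lebesgue integral I := ∫₀^L K(γ(t), γ(s))σ(s) ds, and lim_{h→0⁺} ∫₀^L K(γ(t)+h·n(t), γ(s))σ(s) ds = −(1/2)σ(t) + I, while lim_{h→0⁻} ∫₀^L K(γ(t)+h·n(t), γ(s))σ(s) ds = (1/2)σ(t) + I. -/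
open Real Filter Topology MeasureTheory

noncomputable section

/-- The kernel `K(x, γ(s)) = −G^B_{n_x n_y n_y} + G^B_{n_x τ_y τ_y}`, given by its
explicit formula, with `r = x − γ(s)` and the `x`-derivative in the direction `n(t)`. -/
def K22clamped (γ : ℝ → ℝ × ℝ) (t : ℝ) (x : ℝ × ℝ) (s : ℝ) : ℝ :=
  1 / (2 * π) *
      (dot2 (x - γ s) (tang γ s) * dot2 (tang γ s) (nor γ t)
        - dot2 (x - γ s) (nor γ s) * dot2 (nor γ s) (nor γ t))
      / dot2 (x - γ s) (x - γ s)
    + 1 / (2 * π) * dot2 (x - γ s) (nor γ t) *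
      ((dot2 (x - γ s) (nor γ s)) ^ 2 - (dot2 (x - γ s) (tang γ s)) ^ 2)
      / (dot2 (x - γ s) (x - γ s)) ^ 2

open Asymptotics in
lemma isBigO_div_one {α : Type*} {l : Filter α} {f g : α → ℝ} (h : f =O[l] g) :
    (fun z => f z / g z) =O[l] (fun _ => (1:ℝ)) := by
  obtain ⟨C, hC⟩ := h.bound
  refine IsBigO.of_bound |C| ?_
  filter_upwards [hC] with z hz
  simp only [Real.norm_eq_abs, abs_one, mul_one, abs_div] at *
  by_cases hg : g z = 0
  · simp [hg]
  · rw [div_le_iff₀ (abs_pos.2 hg)]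
    exact hz.trans (mul_le_mul_of_nonneg_right (le_abs_self _) (abs_nonneg _))

open Asymptotics in
lemma main_bigO {α : Type*} {l : Filter α} {u h P Q R S T w : α → ℝ}
    (hu : u =O[l] w) (hh : h =O[l] w) (hw : w =O[l] (fun _ => (1:ℝ)))
    (hP : (fun z => P z + u z) =O[l] (fun z => w z ^ 2))
    (hQ : (fun z => Q z - h z) =O[l] (fun z => w z ^ 2))
    (hR : (fun z => R z - h z) =O[l] (fun z => w z ^ 2))
    (hS : S =O[l] w) (hT : (fun z => T z - 1) =O[l] w)
    (hD : (fun z => w z ^ 2) =O[l] (fun z => P z ^ 2 + Q z ^ 2))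
    (hq : (fun z => w z ^ 2) =O[l] (fun z => u z ^ 2 + h z ^ 2)) :
    (fun z => (P z * S z - Q z * T z) / (P z ^ 2 + Q z ^ 2)
      + R z * (Q z ^ 2 - P z ^ 2) / (P z ^ 2 + Q z ^ 2) ^ 2
      + 2 * (h z * u z ^ 2 / (u z ^ 2 + h z ^ 2) ^ 2)) =O[l] (fun _ => (1:ℝ)) := by
  have hw2 : (fun z => w z ^ 2) =O[l] w := by
    have := (isBigO_refl w l).mul hw
    refine this.congr (fun z => by ring) (fun z => by ring)
  have P1 : P =O[l] w := ((hP.trans hw2).sub hu).congr_left (fun z => by ring)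
  have Q1 : Q =O[l] w := ((hQ.trans hw2).add hh).congr_left (fun z => by ring)
  have R1 : R =O[l] w := ((hR.trans hw2).add hh).congr_left (fun z => by ring)
  have T1 : T =O[l] (fun _ => (1:ℝ)) :=
    ((hT.trans hw).add (isBigO_refl (fun _ => (1:ℝ)) l)).congr_left (fun z => by ring)
  -- N1 + h
  have N1 : (fun z => (P z * S z - Q z * T z) + h z) =O[l] (fun z => w z ^ 2) := by
    have a := (P1.mul hS).congr_right (g₂ := fun z => w z ^ 2) (fun z => by ring)
    have b := (hQ.mul T1).congr_right (g₂ := fun z => w z ^ 2) (fun z => by ring)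
    have c := (hh.mul hT).congr_right (g₂ := fun z => w z ^ 2) (fun z => by ring)
    exact ((a.sub b).sub c).congr_left (fun z => by ring)
  have P2 : (fun z => P z ^ 2 - u z ^ 2) =O[l] (fun z => w z ^ 3) := by
    exact (hP.mul (P1.sub hu)).congr (fun z => by ring) (fun z => by ring)
  have Q2 : (fun z => Q z ^ 2 - h z ^ 2) =O[l] (fun z => w z ^ 3) := by
    exact (hQ.mul (Q1.add hh)).congr (fun z => by ring) (fun z => by ring)
  have D2 : (fun z => (P z ^ 2 + Q z ^ 2) - (u z ^ 2 + h z ^ 2)) =O[l] (fun z => w z ^ 3) :=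
    (P2.add Q2).congr_left (fun z => by ring)
  have q1 : (fun z => u z ^ 2 + h z ^ 2) =O[l] (fun z => w z ^ 2) := (hu.pow 2).add (hh.pow 2)
  have D1 : (fun z => P z ^ 2 + Q z ^ 2) =O[l] (fun z => w z ^ 2) := (P1.pow 2).add (Q1.pow 2)
  have N2 : (fun z => R z * (Q z ^ 2 - P z ^ 2) - h z * (h z ^ 2 - u z ^ 2))
      =O[l] (fun z => w z ^ 4) := by
    have a := (hR.mul ((Q1.pow 2).sub (P1.pow 2))).congr_right (g₂ := fun z => w z ^ 4)
      (fun z => by ring)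
    have b := (hh.mul (Q2.sub P2)).congr_right (g₂ := fun z => w z ^ 4) (fun z => by ring)
    exact (a.add b).congr_left (fun z => by ring)
  have E1 : (fun z => ((P z * S z - Q z * T z + h z) * (u z ^ 2 + h z ^ 2)
      + h z * ((P z ^ 2 + Q z ^ 2) - (u z ^ 2 + h z ^ 2)))) =O[l]
      (fun z => (P z ^ 2 + Q z ^ 2) * (u z ^ 2 + h z ^ 2)) := by
    have a := (N1.mul q1).congr_right (g₂ := fun z => w z ^ 2 * w z ^ 2) (fun z => by ring)
    have b := (hh.mul D2).congr_right (g₂ := fun z => w z ^ 2 * w z ^ 2) (fun z => by ring)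
    exact (a.add b).trans (hD.mul hq)
  have E2 : (fun z => R z * (Q z ^ 2 - P z ^ 2) - h z * (h z ^ 2 - u z ^ 2))
      =O[l] (fun z => (P z ^ 2 + Q z ^ 2) ^ 2) := by
    exact (N2.congr_right (g₂ := fun z => (w z ^ 2) ^ 2) (fun z => by ring)).trans (hD.pow 2)
  have E3 : (fun z => h z * (h z ^ 2 - u z ^ 2) *
      (((P z ^ 2 + Q z ^ 2) - (u z ^ 2 + h z ^ 2)) *
        ((P z ^ 2 + Q z ^ 2) + (u z ^ 2 + h z ^ 2))))
      =O[l] (fun z => (P z ^ 2 + Q z ^ 2) ^ 2 * (u z ^ 2 + h z ^ 2) ^ 2) := by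
    have a := ((hh.mul ((hh.pow 2).sub (hu.pow 2))).mul (D2.mul (D1.add q1))).congr_right
      (g₂ := fun z => (w z ^ 2) ^ 2 * (w z ^ 2) ^ 2) (fun z => by ring)
    exact a.trans ((hD.pow 2).mul (hq.pow 2))
  refine (((isBigO_div_one E1).add (isBigO_div_one E2)).sub (isBigO_div_one E3)).congr' ?_
    (Eventually.of_forall fun _ => rfl)
  obtain ⟨C1, hC1⟩ := hD.bound
  obtain ⟨C2, hC2⟩ := hq.bound
  obtain ⟨C3, hC3⟩ := D1.bound
  obtain ⟨C4, hC4⟩ := q1.bound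
  filter_upwards [hC1, hC2, hC3, hC4] with z h1 h2 h3 h4
  by_cases hz : w z = 0
  · simp only [hz, norm_le_zero_iff, ne_eq, OfNat.ofNat_ne_zero, not_false_eq_true, zero_pow, norm_zero, mul_zero] at h3 h4
    simp [h3, h4]
  · have d0 : P z ^ 2 + Q z ^ 2 ≠ 0 := by
      intro hd; rw [hd] at h1; simp [hz] at h1
    have q0 : u z ^ 2 + h z ^ 2 ≠ 0 := by
      intro hd; rw [hd] at h2; simp [hz] at h2
    field_simp
    ring

lemma flat_integral (t a h : ℝ) (hh : h ≠ 0) :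
    ∫ s in (t - a)..(t + a), h * (s - t) ^ 2 / ((s - t) ^ 2 + h ^ 2) ^ 2
      = arctan (a / h) - h * a / (a ^ 2 + h ^ 2) := by
  have hpos : ∀ s : ℝ, (s - t) ^ 2 + h ^ 2 ≠ 0 := fun s => by positivity
  have hd : ∀ s : ℝ, HasDerivAt (fun s => (1/2) * (arctan ((s - t) / h)
      - h * (s - t) / ((s - t) ^ 2 + h ^ 2)))
      (h * (s - t) ^ 2 / ((s - t) ^ 2 + h ^ 2) ^ 2) s := by
    intro s
    have h0 : HasDerivAt (fun s : ℝ => s - t) 1 s := (hasDerivAt_id s).sub_const t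
    have h1 := (h0.div_const h).arctan
    have h2 := (h0.const_mul h).div ((h0.pow 2).add_const (h ^ 2)) (hpos s)
    refine ((h1.sub h2).const_mul (1/2)).congr_deriv ?_
    have := hpos s
    have e : 1 + ((s - t) / h) ^ 2 = ((s - t) ^ 2 + h ^ 2) / h ^ 2 := by field_simp; ring
    simp only [e, Pi.pow_apply]
    field_simp
    push_cast
    ring
  rw [intervalIntegral.integral_eq_sub_of_hasDerivAt (fun s _ => hd s)]
  · have : (t - a - t) / h = - (a / h) := by ring
    have h2 : (t + a - t) / h =  (a / h) := by ring
    rw [this, h2, arctan_neg]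
    have := hpos (t + a)
    have e1 : t + a - t = a := by ring
    have e2 : t - a - t = -a := by ring
    rw [e1, e2]; ring
  · apply Continuous.intervalIntegrable
    exact Continuous.div (by fun_prop) (by fun_prop) (fun s => pow_ne_zero _ (hpos s))

lemma flat_lim_pos (a : ℝ) (ha : 0 < a) :
    Tendsto (fun h : ℝ => arctan (a / h) - h * a / (a ^ 2 + h ^ 2)) (𝓝[>] 0) (𝓝 (π / 2)) := by
  have h1 : Tendsto (fun h : ℝ => a / h) (𝓝[>] 0) atTop := by
    simpa [div_eq_mul_inv] using tendsto_inv_nhdsGT_zero.const_mul_atTop ha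
  have h2 := (tendsto_arctan_atTop.mono_right nhdsWithin_le_nhds).comp h1
  have h3 : Tendsto (fun h : ℝ => h * a / (a ^ 2 + h ^ 2)) (𝓝[>] 0) (𝓝 0) := by
    have : ContinuousAt (fun h : ℝ => h * a / (a ^ 2 + h ^ 2)) 0 :=
      ContinuousAt.div (by fun_prop) (by fun_prop) (by positivity)
    have := this.tendsto
    simp only [zero_mul, zero_div] at this
    exact this.mono_left nhdsWithin_le_nhds
  simpa using h2.sub h3

lemma flat_lim_neg (a : ℝ) (ha : 0 < a) :
    Tendsto (fun h : ℝ => arctan (a / h) - h * a / (a ^ 2 + h ^ 2)) (𝓝[<] 0)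
      (𝓝 (-(π / 2))) := by
  have h1 : Tendsto (fun h : ℝ => a / h) (𝓝[<] 0) atBot := by
    simpa [div_eq_mul_inv] using tendsto_inv_nhdsLT_zero.const_mul_atBot ha
  have h2 := (tendsto_arctan_atBot.mono_right nhdsWithin_le_nhds).comp h1
  have h3 : Tendsto (fun h : ℝ => h * a / (a ^ 2 + h ^ 2)) (𝓝[<] 0) (𝓝 0) := by
    have : ContinuousAt (fun h : ℝ => h * a / (a ^ 2 + h ^ 2)) 0 :=
      ContinuousAt.div (by fun_prop) (by fun_prop) (by positivity)
    have := this.tendsto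
    simp only [zero_mul, zero_div] at this
    exact this.mono_left nhdsWithin_le_nhds
  simpa using h2.sub h3

lemma taylor1 {E : Type*} [NormedAddCommGroup E] [NormedSpace ℝ E] {f : ℝ → E}
    (hf : ContDiff ℝ 1 f) (t a : ℝ) :
    ∃ C : ℝ, 0 ≤ C ∧ ∀ s, |s - t| ≤ a → ‖f s - f t‖ ≤ C * |s - t| := by
  have hc : Continuous (deriv f) := hf.continuous_deriv le_rfl
  obtain ⟨C, hC⟩ := (isCompact_closedBall t a).exists_bound_of_continuousOn hc.continuousOn
  refine ⟨|C|, abs_nonneg _, fun s hs => ?_⟩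
  have ha : 0 ≤ a := (abs_nonneg _).trans hs
  have := (convex_closedBall t a).norm_image_sub_le_of_norm_deriv_le (f := f) (C := |C|)
    (fun x _ => (hf.differentiable one_ne_zero).differentiableAt)
    (fun x hx => (hC x hx).trans (le_abs_self _))
    (Metric.mem_closedBall_self ha) (by simpa [Real.dist_eq] using hs : s ∈ Metric.closedBall t a)
  simpa using this

lemma taylor2 {E : Type*} [NormedAddCommGroup E] [NormedSpace ℝ E] {f : ℝ → E}
    (hf : ContDiff ℝ 2 f) (t a : ℝ) :
    ∃ C : ℝ, 0 ≤ C ∧ ∀ s, |s - t| ≤ a → ‖f s - f t - (s - t) • deriv f t‖ ≤ C * |s - t| ^ 2 := by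
  have hd : ContDiff ℝ 1 (deriv f) := by
    have : ContDiff ℝ (1 + 1) f := by simpa [one_add_one_eq_two] using hf
    exact (contDiff_succ_iff_deriv.1 this).2.2
  obtain ⟨C, hC0, hC⟩ := taylor1 hd t a
  refine ⟨C, hC0, fun s hs => ?_⟩
  have hder : ∀ x, HasDerivAt (fun x => f x - (x - t) • deriv f t) (deriv f x - deriv f t) x := by
    intro x
    have h1 := ((hf.differentiable two_ne_zero) x).hasDerivAt
    have h2 := ((hasDerivAt_id x).sub_const t).smul_const (deriv f t)
    exact (h1.sub h2).congr_deriv (by simp)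
  have := (convex_closedBall t |s - t|).norm_image_sub_le_of_norm_hasDerivWithin_le
    (f := fun x => f x - (x - t) • deriv f t) (C := C * |s - t|)
    (fun x _ => (hder x).hasDerivWithinAt)
    (fun x hx => by
      have hx' : |x - t| ≤ |s - t| := by simpa [Real.dist_eq] using hx
      exact (hC x (hx'.trans hs)).trans (mul_le_mul_of_nonneg_left hx' hC0))
    (Metric.mem_closedBall_self (abs_nonneg _))
    (by simp [Real.dist_eq] : s ∈ Metric.closedBall t |s - t|)
  calc ‖f s - f t - (s - t) • deriv f t‖
      = ‖f s - (s - t) • deriv f t - (f t - (t - t) • deriv f t)‖ := by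
        congr 1; simp; abel
    _ ≤ C * |s - t| * ‖s - t‖ := this
    _ = _ := by rw [Real.norm_eq_abs]; ring

lemma inj_local {L : ℝ} (hL : 0 < L) {γ : ℝ → ℝ × ℝ} (hper : ∀ s, γ (s + L) = γ s)
    (hinj : Set.InjOn γ (Set.Ico 0 L)) {s t : ℝ} (hst : |s - t| ≤ L / 2) (h : γ s = γ t) :
    s = t := by
  have hp : Function.Periodic γ L := hper
  have e : ∀ x, γ (toIcoMod hL 0 x) = γ x := fun x => by
    rw [toIcoMod]; exact hp.sub_zsmul_eq _
  have m : ∀ x, toIcoMod hL 0 x ∈ Set.Ico 0 L := fun x => by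
    simpa using toIcoMod_mem_Ico hL 0 x
  have := hinj (m s) (m t) (by rw [e, e, h])
  rw [toIcoMod, toIcoMod] at this
  have hk : s - t = ((toIcoDiv hL 0 s - toIcoDiv hL 0 t : ℤ) : ℝ) * L := by
    simp only [zsmul_eq_mul] at this
    push_cast; linarith
  set k := toIcoDiv hL 0 s - toIcoDiv hL 0 t
  have : k = 0 := by
    by_contra h0
    have h1 : (1:ℝ) ≤ |(k:ℝ)| := by exact_mod_cast Int.one_le_abs h0
    rw [hk, abs_mul, abs_of_pos hL] at hst
    nlinarith
  rw [this] at hk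
  simp at hk; linarith

lemma dot2_self_pos {v : ℝ × ℝ} (hv : v ≠ 0) : 0 < dot2 v v := by
  by_contra h
  apply hv
  unfold dot2 at h
  ext <;> simp <;> nlinarith [mul_self_nonneg v.1, mul_self_nonneg v.2]

lemma chord_arc {L : ℝ} (hL : 0 < L) {γ : ℝ → ℝ × ℝ} (hγ : ContDiff ℝ 1 γ)
    (hper : ∀ s, γ (s + L) = γ s)
    (hinj : Set.InjOn γ (Set.Ico 0 L))
    (harc : ∀ s, dot2 (deriv γ s) (deriv γ s) = 1) (t : ℝ) :
    ∃ c > 0, ∀ s, |s - t| ≤ L / 2 → c * (s - t) ^ 2 ≤ dot2 (γ t - γ s) (γ t - γ s) := by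
  have hdiff := hγ.differentiable one_ne_zero
  have hcont : Continuous (dslope γ t) := by
    rw [continuous_iff_continuousAt]
    intro x
    by_cases hx : x = t
    · rw [hx]; exact continuousAt_dslope_same.2 (hdiff t)
    · exact (continuousAt_dslope_of_ne hx).2 (hdiff x).continuousAt
  have hc2 : Continuous (fun s => dot2 (dslope γ t s) (dslope γ t s)) := by
    unfold dot2; fun_prop
  obtain ⟨s0, hs0, hmin⟩ := (isCompact_closedBall t (L / 2)).exists_isMinOn
    ⟨t, Metric.mem_closedBall_self (by positivity)⟩ hc2.continuousOn
  refine ⟨dot2 (dslope γ t s0) (dslope γ t s0), ?_, fun s hs => ?_⟩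
  · apply dot2_self_pos
    by_cases h : s0 = t
    · rw [h, dslope_same]
      intro h0
      have := harc t
      rw [h0] at this; simp [dot2] at this
    · rw [dslope_of_ne _ h, slope]
      have h0 : s0 - t ≠ 0 := sub_ne_zero.2 h
      simp only [vsub_eq_sub, ne_eq, smul_eq_zero, inv_eq_zero, h0, false_or]
      intro h1
      exact h (inj_local hL hper hinj (by simpa [Real.dist_eq] using hs0) (sub_eq_zero.1 h1))
  · have h1 : dot2 (dslope γ t s0) (dslope γ t s0) ≤ dot2 (dslope γ t s) (dslope γ t s) :=
      hmin (by simpa [Real.dist_eq] using hs : s ∈ Metric.closedBall t (L / 2))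
    have h2 := sub_smul_dslope γ t s
    have h3 : dot2 (γ t - γ s) (γ t - γ s)
        = dot2 (dslope γ t s) (dslope γ t s) * (s - t) ^ 2 := by
      have : γ t - γ s = -((s - t) • dslope γ t s) := by rw [h2]; simp
      rw [this]
      generalize dslope γ t s = v
      simp only [dot2, Prod.fst_neg, Prod.snd_neg, Prod.smul_fst, Prod.smul_snd, smul_eq_mul]
      ring
    rw [h3]
    exact mul_le_mul_of_nonneg_right h1 (sq_nonneg _)

lemma K_eq_s16 {γ : ℝ → ℝ × ℝ} (harc : ∀ s, dot2 (deriv γ s) (deriv γ s) = 1)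
    (t s : ℝ) (x : ℝ × ℝ) :
    K22clamped γ t x s = 1 / (2 * π) *
     ((dot2 (x - γ s) (tang γ s) * dot2 (tang γ s) (nor γ t)
        - dot2 (x - γ s) (nor γ s) * dot2 (nor γ s) (nor γ t))
      / (dot2 (x - γ s) (tang γ s) ^ 2 + dot2 (x - γ s) (nor γ s) ^ 2)
      + dot2 (x - γ s) (nor γ t) *
      ((dot2 (x - γ s) (nor γ s)) ^ 2 - (dot2 (x - γ s) (tang γ s)) ^ 2)
      / (dot2 (x - γ s) (tang γ s) ^ 2 + dot2 (x - γ s) (nor γ s) ^ 2) ^ 2) := by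
  have : dot2 (x - γ s) (tang γ s) ^ 2 + dot2 (x - γ s) (nor γ s) ^ 2
      = dot2 (x - γ s) (x - γ s) := by
    have h := harc s
    simp only [dot2, tang, nor] at h ⊢
    linear_combination ((x - γ s).1 ^ 2 + (x - γ s).2 ^ 2) * h
  rw [this, K22clamped]
  ring

open Asymptotics in
lemma kernel_bound {L : ℝ} (hL : 0 < L) {γ : ℝ → ℝ × ℝ} (hγ : ContDiff ℝ 2 γ)
    (hper : ∀ s, γ (s + L) = γ s)
    (hinj : Set.InjOn γ (Set.Ico 0 L))
    (harc : ∀ s, dot2 (deriv γ s) (deriv γ s) = 1) (t : ℝ) :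
    ∃ h₀ > 0, ∃ c > 0, ∃ M, ∀ h s, |h| ≤ h₀ → |s - t| ≤ L / 2 →
      c * ((s - t) ^ 2 + h ^ 2) ≤
        dot2 (γ t + h • nor γ t - γ s) (γ t + h • nor γ t - γ s) ∧
      |K22clamped γ t (γ t + h • nor γ t) s
        + 1 / π * (h * (s - t) ^ 2 / ((s - t) ^ 2 + h ^ 2) ^ 2)| ≤ M := by
  have hd : ContDiff ℝ 1 (deriv γ) := by
    have : ContDiff ℝ (1 + 1) γ := by simpa [one_add_one_eq_two] using hγ
    exact (contDiff_succ_iff_deriv.1 this).2.2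
  obtain ⟨c, hc, hca⟩ := chord_arc hL (hγ.of_le (by norm_num)) hper hinj harc t
  obtain ⟨C1, hC1, ht1⟩ := taylor1 hd t (L / 2)
  obtain ⟨C2, hC2, ht2⟩ := taylor2 hγ t (L / 2)
  have harct := harc t
  simp only [dot2] at harct
  -- components
  have ha1 : |(deriv γ t).1| ≤ 1 := by rw [← sq_le_one_iff_abs_le_one]; nlinarith [sq_nonneg (deriv γ t).2]
  have hb1 : |(deriv γ t).2| ≤ 1 := by rw [← sq_le_one_iff_abs_le_one]; nlinarith [sq_nonneg (deriv γ t).1]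
  have he : ∀ s, |s - t| ≤ L / 2 → |(γ s).1 - (γ t).1 - (s - t) * (deriv γ t).1| ≤ C2 * |s - t| ^ 2 ∧
      |(γ s).2 - (γ t).2 - (s - t) * (deriv γ t).2| ≤ C2 * |s - t| ^ 2 := by
    intro s hs
    have := norm_prod_le_iff.1 (ht2 s hs)
    simpa using this
  have hf : ∀ s, |s - t| ≤ L / 2 → |(deriv γ s).1 - (deriv γ t).1| ≤ C1 * |s - t| ∧
      |(deriv γ s).2 - (deriv γ t).2| ≤ C1 * |s - t| := by
    intro s hs
    have := norm_prod_le_iff.1 (ht1 s hs)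
    simpa using this
  set h₀ : ℝ := c / (8 * (C2 + 1)) with hh₀
  have hh₀pos : 0 < h₀ := by positivity
  have hDlow : ∀ h s, |h| ≤ h₀ → |s - t| ≤ L / 2 →
      min (c / 2) 1 * ((s - t) ^ 2 + h ^ 2) ≤
        dot2 (γ t + h • nor γ t - γ s) (γ t + h • nor γ t - γ s) := by
    intro h s hh hs
    have h1 := hca s hs
    have h2 := he s hs
    rw [sq_abs] at h2
    set e1 := (γ s).1 - (γ t).1 - (s - t) * (deriv γ t).1 with he1
    set e2 := (γ s).2 - (γ t).2 - (s - t) * (deriv γ t).2 with he2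
    have key : dot2 (γ t + h • nor γ t - γ s) (γ t + h • nor γ t - γ s)
      = dot2 (γ t - γ s) (γ t - γ s) + h ^ 2
        - 2 * h * (e1 * (deriv γ t).2 - e2 * (deriv γ t).1) := by
      simp only [dot2, nor, he1, he2, Prod.fst_add, Prod.snd_add, Prod.fst_sub, Prod.snd_sub,
        Prod.smul_fst, Prod.smul_snd, smul_eq_mul]
      linear_combination h ^ 2 * harct
    have b1 : |e1 * (deriv γ t).2 - e2 * (deriv γ t).1| ≤ 2 * C2 * (s - t) ^ 2 := by
      have x1 : |e1 * (deriv γ t).2| ≤ C2 * (s - t) ^ 2 * 1 := by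
        rw [abs_mul]; exact mul_le_mul h2.1 hb1 (abs_nonneg _) (by positivity)
      have x2 : |e2 * (deriv γ t).1| ≤ C2 * (s - t) ^ 2 * 1 := by
        rw [abs_mul]; exact mul_le_mul h2.2 ha1 (abs_nonneg _) (by positivity)
      have := abs_sub (e1 * (deriv γ t).2) (e2 * (deriv γ t).1)
      linarith
    have b2 : |2 * h * (e1 * (deriv γ t).2 - e2 * (deriv γ t).1)| ≤ c / 2 * (s - t) ^ 2 := by
      rw [abs_mul, abs_mul, abs_two]
      calc 2 * |h| * |e1 * (deriv γ t).2 - e2 * (deriv γ t).1|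
          ≤ 2 * h₀ * (2 * (C2 + 1) * (s - t) ^ 2) := by
            refine mul_le_mul (by linarith) (b1.trans ?_) (abs_nonneg _) (by positivity)
            nlinarith [sq_nonneg (s - t)]
        _ = c / 2 * (s - t) ^ 2 := by rw [hh₀]; field_simp; ring
    have b3 := (abs_le.1 b2).2
    rw [key]
    have m1 : min (c / 2) 1 * (s - t) ^ 2 ≤ c / 2 * (s - t) ^ 2 :=
      mul_le_mul_of_nonneg_right (min_le_left _ _) (sq_nonneg _)
    have m2 : min (c / 2) 1 * h ^ 2 ≤ 1 * h ^ 2 :=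
      mul_le_mul_of_nonneg_right (min_le_right _ _) (sq_nonneg _)
    nlinarith
  have hcm : 0 < min (c / 2) 1 := by positivity
  refine ⟨h₀, hh₀pos, min (c / 2) 1, hcm, ?_⟩
  -- big O part
  set A : Set (ℝ × ℝ) := {z | |z.1| ≤ h₀ ∧ |z.2 - t| ≤ L / 2} with hA
  set w : ℝ × ℝ → ℝ := fun z => |z.1| + |z.2 - t| with hw
  have wnn : ∀ z, 0 ≤ w z := fun z => by positivity
  have mk : ∀ {f g : ℝ × ℝ → ℝ} (C : ℝ), (∀ z ∈ A, |f z| ≤ C * |g z|) → f =O[𝓟 A] g := by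
    intro f g C hC
    exact isBigO_principal.2 ⟨C, by simpa using hC⟩
  have hu : (fun z : ℝ × ℝ => z.2 - t) =O[𝓟 A] w := mk 1 (fun z hz => by
    rw [abs_of_nonneg (wnn z)]; simp [hw])
  have hh : (fun z : ℝ × ℝ => z.1) =O[𝓟 A] w := mk 1 (fun z hz => by
    rw [abs_of_nonneg (wnn z)]; simp [hw])
  have hw1 : w =O[𝓟 A] (fun _ => (1:ℝ)) := mk (h₀ + L / 2) (fun z hz => by
    rw [abs_of_nonneg (wnn z)]; simp only [hw, abs_one]; linarith [hz.1, hz.2])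
  have hq : (fun z => w z ^ 2) =O[𝓟 A] (fun z => (z.2 - t) ^ 2 + z.1 ^ 2) := mk 2 (fun z hz => by
    rw [abs_of_nonneg (by positivity), abs_of_nonneg (by positivity)]
    simp only [hw]
    nlinarith [sq_nonneg (|z.1| - |z.2 - t|), sq_abs z.1, sq_abs (z.2 - t)])
  have hf1 : (fun z : ℝ × ℝ => (deriv γ z.2).1 - (deriv γ t).1) =O[𝓟 A] w :=
    (mk (g := fun z => z.2 - t) C1 (fun z hz => (hf z.2 hz.2).1)).trans hu
  have hf2 : (fun z : ℝ × ℝ => (deriv γ z.2).2 - (deriv γ t).2) =O[𝓟 A] w :=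
    (mk (g := fun z => z.2 - t) C1 (fun z hz => (hf z.2 hz.2).2)).trans hu
  have he1 : (fun z : ℝ × ℝ => (γ z.2).1 - (γ t).1 - (z.2 - t) * (deriv γ t).1)
      =O[𝓟 A] (fun z => w z ^ 2) :=
    (mk (g := fun z => (z.2 - t) ^ 2) C2 (fun z hz => by
      rw [abs_pow]; exact (he z.2 hz.2).1)).trans (hu.pow 2)
  have he2 : (fun z : ℝ × ℝ => (γ z.2).2 - (γ t).2 - (z.2 - t) * (deriv γ t).2)
      =O[𝓟 A] (fun z => w z ^ 2) :=
    (mk (g := fun z => (z.2 - t) ^ 2) C2 (fun z hz => by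
      rw [abs_pow]; exact (he z.2 hz.2).2)).trans (hu.pow 2)
  have hs1 : (fun z : ℝ × ℝ => (deriv γ z.2).1) =O[𝓟 A] (fun _ => (1:ℝ)) :=
    ((hf1.trans hw1).add (isBigO_const_const (deriv γ t).1 one_ne_zero _)).congr_left
      (fun z => by ring)
  have hs2 : (fun z : ℝ × ℝ => (deriv γ z.2).2) =O[𝓟 A] (fun _ => (1:ℝ)) :=
    ((hf2.trans hw1).add (isBigO_const_const (deriv γ t).2 one_ne_zero _)).congr_left
      (fun z => by ring)
  have hS : (fun z : ℝ × ℝ => dot2 (tang γ z.2) (nor γ t)) =O[𝓟 A] w := by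
    refine ((hf1.const_mul_left (deriv γ t).2).sub (hf2.const_mul_left (deriv γ t).1)).congr_left
      (fun z => ?_)
    simp only [dot2, tang, nor]; ring
  have hT : (fun z : ℝ × ℝ => dot2 (nor γ z.2) (nor γ t) - 1) =O[𝓟 A] w := by
    refine ((hf1.const_mul_left (deriv γ t).1).add (hf2.const_mul_left (deriv γ t).2)).congr_left
      (fun z => ?_)
    simp only [dot2, nor]; linear_combination -harct
  have hR : (fun z : ℝ × ℝ => dot2 (γ t + z.1 • nor γ t - γ z.2) (nor γ t) - z.1)
      =O[𝓟 A] (fun z => w z ^ 2) := by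
    refine ((he2.const_mul_left (deriv γ t).1).sub (he1.const_mul_left (deriv γ t).2)).congr_left
      (fun z => ?_)
    simp only [dot2, nor, Prod.fst_add, Prod.snd_add, Prod.fst_sub, Prod.snd_sub,
        Prod.smul_fst, Prod.smul_snd, smul_eq_mul]
    linear_combination (-z.1) * harct
  have hP : (fun z : ℝ × ℝ => dot2 (γ t + z.1 • nor γ t - γ z.2) (tang γ z.2) + (z.2 - t))
      =O[𝓟 A] (fun z => w z ^ 2) := by
    have a := (hh.mul hS).congr_right (g₂ := fun z => w z ^ 2) (fun z => by ring)
    have b := (hu.mul hT).congr_right (g₂ := fun z => w z ^ 2) (fun z => by ring)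
    have c := (he1.mul hs1).congr_right (g₂ := fun z => w z ^ 2) (fun z => by ring)
    have d := (he2.mul hs2).congr_right (g₂ := fun z => w z ^ 2) (fun z => by ring)
    refine (((a.sub b).sub c).sub d).congr_left (fun z => ?_)
    simp only [dot2, nor, tang, Prod.fst_add, Prod.snd_add, Prod.fst_sub, Prod.snd_sub,
        Prod.smul_fst, Prod.smul_snd, smul_eq_mul]
    ring
  have hQ : (fun z : ℝ × ℝ => dot2 (γ t + z.1 • nor γ t - γ z.2) (nor γ z.2) - z.1)
      =O[𝓟 A] (fun z => w z ^ 2) := by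
    have a := (hh.mul hT).congr_right (g₂ := fun z => w z ^ 2) (fun z => by ring)
    have b := (hu.mul hS).congr_right (g₂ := fun z => w z ^ 2) (fun z => by ring)
    have c := (he1.mul hs2).congr_right (g₂ := fun z => w z ^ 2) (fun z => by ring)
    have d := (he2.mul hs1).congr_right (g₂ := fun z => w z ^ 2) (fun z => by ring)
    refine (((a.add b).sub c).add d).congr_left (fun z => ?_)
    simp only [dot2, nor, tang, Prod.fst_add, Prod.snd_add, Prod.fst_sub, Prod.snd_sub,
        Prod.smul_fst, Prod.smul_snd, smul_eq_mul]
    ring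
  have hD : (fun z => w z ^ 2) =O[𝓟 A] (fun z : ℝ × ℝ =>
      dot2 (γ t + z.1 • nor γ t - γ z.2) (tang γ z.2) ^ 2 +
      dot2 (γ t + z.1 • nor γ t - γ z.2) (nor γ z.2) ^ 2) := by
    refine hq.trans (mk (1 / min (c / 2) 1) (fun z hz => ?_))
    have h1 := hDlow z.1 z.2 hz.1 hz.2
    have h2 : dot2 (γ t + z.1 • nor γ t - γ z.2) (tang γ z.2) ^ 2 +
      dot2 (γ t + z.1 • nor γ t - γ z.2) (nor γ z.2) ^ 2 =
      dot2 (γ t + z.1 • nor γ t - γ z.2) (γ t + z.1 • nor γ t - γ z.2) := by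
      have h := harc z.2
      generalize γ t + z.1 • nor γ t - γ z.2 = v
      simp only [dot2, tang, nor] at h ⊢
      linear_combination (v.1 ^ 2 + v.2 ^ 2) * h
    rw [abs_of_nonneg (by positivity), abs_of_nonneg (by positivity), h2, one_div,
      ← div_eq_inv_mul, le_div_iff₀ hcm, mul_comm]
    exact h1
  obtain ⟨M, hM⟩ := isBigO_principal.1 (main_bigO hu hh hw1 hP hQ hR hS hT hD hq)
  refine ⟨1 / (2 * π) * M, fun h s hh hs => ⟨hDlow h s hh hs, ?_⟩⟩
  have := hM (h, s) ⟨hh, hs⟩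
  rw [Real.norm_eq_abs, norm_one, mul_one] at this
  rw [K_eq_s16 harc]
  refine le_trans (le_of_eq ?_) (mul_le_mul_of_nonneg_left this (by positivity : 0 ≤ 1 / (2 * π)))
  rw [← abs_of_pos (by positivity : 0 < 1 / (2 * π)), ← abs_mul,
    abs_of_pos (by positivity : 0 < 1 / (2 * π))]
  congr 1
  have hpi := Real.pi_ne_zero
  field_simp

lemma K_continuousAt_h {γ : ℝ → ℝ × ℝ} (t s : ℝ)
    (hne : dot2 (γ t - γ s) (γ t - γ s) ≠ 0) :
    ContinuousAt (fun h : ℝ => K22clamped γ t (γ t + h • nor γ t) s) 0 := by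
  have hx : ContinuousAt (fun h : ℝ => γ t + h • nor γ t - γ s) 0 := by fun_prop
  have hdot : ∀ v : ℝ × ℝ, ContinuousAt (fun h : ℝ => dot2 (γ t + h • nor γ t - γ s) v) 0 := by
    intro v; unfold dot2; fun_prop
  have hD : ContinuousAt (fun h : ℝ => dot2 (γ t + h • nor γ t - γ s)
      (γ t + h • nor γ t - γ s)) 0 := by unfold dot2; fun_prop
  have h1 := hdot (tang γ s)
  have h2 := hdot (nor γ s)
  have h3 := hdot (nor γ t)
  have hne' : dot2 (γ t + (0:ℝ) • nor γ t - γ s) (γ t + (0:ℝ) • nor γ t - γ s) ≠ 0 := by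
    simpa using hne
  unfold K22clamped
  refine ContinuousAt.add (ContinuousAt.div ?_ hD hne')
    (ContinuousAt.div ?_ (hD.pow 2) (pow_ne_zero _ hne'))
  · exact continuousAt_const.mul ((h1.mul continuousAt_const).sub (h2.mul continuousAt_const))
  · exact (continuousAt_const.mul h3).mul ((h2.pow 2).sub (h1.pow 2))

lemma K_continuous_s {γ : ℝ → ℝ × ℝ} (hγ : ContDiff ℝ 1 γ) (t : ℝ) (x : ℝ × ℝ)
    (hne : ∀ s, dot2 (x - γ s) (x - γ s) ≠ 0) :
    Continuous (fun s : ℝ => K22clamped γ t x s) := by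
  have hc := hγ.continuous
  have hd : Continuous (deriv γ) := hγ.continuous_deriv le_rfl
  have hD : Continuous (fun s => dot2 (x - γ s) (x - γ s)) := by unfold dot2; fun_prop
  unfold K22clamped
  refine Continuous.add (Continuous.div ?_ hD hne)
    (Continuous.div ?_ (hD.pow 2) (fun s => pow_ne_zero _ (hne s)))
  · unfold dot2 tang nor; fun_prop
  · unfold dot2 tang nor; fun_prop

theorem stmt16 (L : ℝ) (hL : 0 < L) (γ : ℝ → ℝ × ℝ)
    (hγ : ContDiff ℝ (⊤ : ℕ∞) γ)
    (hper : ∀ s, γ (s + L) = γ s)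
    (hinj : Set.InjOn γ (Set.Ico 0 L))
    (harc : ∀ s, dot2 (deriv γ s) (deriv γ s) = 1)
    (σ : ℝ → ℝ) (hσ : ContDiff ℝ (⊤ : ℕ∞) σ) (hσper : ∀ s, σ (s + L) = σ s)
    (t : ℝ) :
    ∃ h₀ > (0 : ℝ),
      (∀ h : ℝ, 0 < |h| → |h| < h₀ → ∀ s : ℝ, γ t + h • nor γ t ≠ γ s) ∧
      (∃ M : ℝ, ∀ s ∈ Set.Icc (0 : ℝ) L, |K22clamped γ t (γ t) s * σ s| ≤ M) ∧
      Tendsto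
        (fun h : ℝ => ∫ s in (0 : ℝ)..L, K22clamped γ t (γ t + h • nor γ t) s * σ s)
        (𝓝[>] (0 : ℝ))
        (𝓝 (-(1 / 2) * σ t + ∫ s in (0 : ℝ)..L, K22clamped γ t (γ t) s * σ s)) ∧
      Tendsto
        (fun h : ℝ => ∫ s in (0 : ℝ)..L, K22clamped γ t (γ t + h • nor γ t) s * σ s)
        (𝓝[<] (0 : ℝ))
        (𝓝 (1 / 2 * σ t + ∫ s in (0 : ℝ)..L, K22clamped γ t (γ t) s * σ s)) := by
  have hγ2 : ContDiff ℝ 2 γ := contDiff_infty.1 hγ 2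
  have hγ1 : ContDiff ℝ 1 γ := hγ.of_le (by exact_mod_cast le_top)
  have hσ1 : ContDiff ℝ 1 σ := hσ.of_le (by exact_mod_cast le_top)
  obtain ⟨h₀, hh₀, c, hc, M, hM⟩ := kernel_bound hL hγ2 hper hinj harc t
  obtain ⟨C1, hC1, hσt⟩ := taylor1 hσ1 t (L / 2)
  obtain ⟨B, hB⟩ := (isCompact_closedBall t (L / 2)).exists_bound_of_continuousOn
    hσ.continuous.continuousOn
  have hpi := Real.pi_pos
  have hM0 : 0 ≤ M := (abs_nonneg _).trans
    (hM 0 t (by simpa using hh₀.le) (by simp; positivity)).2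
  -- reduction to one period
  have hderper : ∀ s, deriv γ (s + L) = deriv γ s := by
    intro s
    rw [← deriv_comp_add_const]
    congr 1
    funext x; exact hper x
  have hKper : ∀ x s, K22clamped γ t x (s + L) = K22clamped γ t x s := by
    intro x s
    simp only [K22clamped, tang, nor, hper, hderper]
  have hred : ∀ s, ∃ s', |s' - t| ≤ L / 2 ∧ γ s = γ s' ∧
      (∀ x, K22clamped γ t x s = K22clamped γ t x s') ∧ σ s = σ s' := by
    intro s
    have hp : Function.Periodic (fun s => (γ s, (fun x => K22clamped γ t x s), σ s)) L := by
      intro s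
      simp only [hper, hKper, hσper]
    obtain ⟨y, hy, he⟩ := hp.exists_mem_Ico hL s (t - L / 2)
    simp only [Prod.mk.injEq] at he
    refine ⟨y, ?_, he.1, fun x => congrFun he.2.1 x, he.2.2⟩
    rw [abs_le]; constructor <;> linarith [hy.1, hy.2]
  have hDpos : ∀ h, h ≠ 0 → |h| ≤ h₀ → ∀ s,
      dot2 (γ t + h • nor γ t - γ s) (γ t + h • nor γ t - γ s) ≠ 0 := by
    intro h h0 hh s
    obtain ⟨s', hs', e, -⟩ := hred s
    rw [e]
    have := (hM h s' hh hs').1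
    have : 0 < c * ((s' - t) ^ 2 + h ^ 2) := by positivity
    linarith
  -- the regularised integrand
  set G : ℝ → ℝ → ℝ := fun h s => K22clamped γ t (γ t + h • nor γ t) s * σ s
    + 1 / π * σ t * (h * (s - t) ^ 2 / ((s - t) ^ 2 + h ^ 2) ^ 2) with hG
  have hbd : ∀ h s, |h| ≤ h₀ → |s - t| ≤ L / 2 → |G h s| ≤ M * |B| + 1 / π * C1 := by
    intro h s hh hs
    have e : G h s = (K22clamped γ t (γ t + h • nor γ t) s
        + 1 / π * (h * (s - t) ^ 2 / ((s - t) ^ 2 + h ^ 2) ^ 2)) * σ s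
        - 1 / π * ((h * (s - t) ^ 2 / ((s - t) ^ 2 + h ^ 2) ^ 2) * (σ s - σ t)) := by
      simp only [hG]; ring
    rw [e]
    refine (abs_sub _ _).trans (add_le_add ?_ ?_)
    · rw [abs_mul]
      refine mul_le_mul (hM h s hh hs).2 ?_ (abs_nonneg _) hM0
      exact (hB s (by simpa [Real.dist_eq] using hs)).trans (le_abs_self _)
    · rw [abs_mul, abs_of_pos (by positivity : 0 < 1 / π)]
      refine mul_le_mul_of_nonneg_left ?_ (by positivity)
      rw [abs_mul]
      have h1 : |σ s - σ t| ≤ C1 * |s - t| := hσt s hs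
      have h2 : |h * (s - t) ^ 2 / ((s - t) ^ 2 + h ^ 2) ^ 2| * |s - t| ≤ 1 := by
        rw [abs_div, abs_mul, abs_of_nonneg (sq_nonneg (s - t)),
          abs_of_nonneg (by positivity : 0 ≤ ((s - t) ^ 2 + h ^ 2) ^ 2), div_mul_eq_mul_div]
        refine div_le_one_of_le₀ ?_ (by positivity)
        rw [← sq_abs (s - t), ← sq_abs h]
        have p1 := abs_nonneg (s - t)
        have p2 := abs_nonneg h
        generalize |s - t| = x at *
        generalize |h| = y at *
        nlinarith [sq_nonneg (x - y), sq_nonneg (x ^ 2 - y ^ 2), mul_nonneg p1 p2,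
          mul_nonneg (sq_nonneg x) (sq_nonneg (x - y)), sq_nonneg (x * y)]
      calc _ ≤ |h * (s - t) ^ 2 / ((s - t) ^ 2 + h ^ 2) ^ 2| * (C1 * |s - t|) :=
            mul_le_mul_of_nonneg_left h1 (abs_nonneg _)
        _ = C1 * (|h * (s - t) ^ 2 / ((s - t) ^ 2 + h ^ 2) ^ 2| * |s - t|) := by ring
        _ ≤ C1 * 1 := mul_le_mul_of_nonneg_left h2 hC1
        _ = C1 := mul_one _
  have hG0 : ∀ s, G 0 s = K22clamped γ t (γ t) s * σ s := by
    intro s; simp [hG]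
  have hshift : ∀ x, ∫ s in (0:ℝ)..L, K22clamped γ t x s * σ s
      = ∫ s in (t - L / 2)..(t + L / 2), K22clamped γ t x s * σ s := by
    intro x
    have hp : Function.Periodic (fun s => K22clamped γ t x s * σ s) L := by
      intro s; simp only [hKper, hσper]
    have := hp.intervalIntegral_add_eq 0 (t - L / 2)
    rw [zero_add] at this
    rw [this]
    congr 1; ring
  have hcontK : ∀ h, h ≠ 0 → |h| ≤ h₀ →
      Continuous (fun s => K22clamped γ t (γ t + h • nor γ t) s * σ s) := fun h h0 hh =>
    (K_continuous_s hγ1 t _ (hDpos h h0 hh)).mul hσ.continuous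
  have hcontF : ∀ h : ℝ, h ≠ 0 →
      Continuous (fun s => h * (s - t) ^ 2 / ((s - t) ^ 2 + h ^ 2) ^ 2) := fun h h0 =>
    Continuous.div (by fun_prop) (by fun_prop) (fun s => by positivity)
  have hsmall : ∀ᶠ h in 𝓝[≠] (0:ℝ), h ≠ 0 ∧ |h| ≤ h₀ := by
    have h1 : ∀ᶠ h in 𝓝 (0:ℝ), |h| ≤ h₀ := by
      have := Metric.closedBall_mem_nhds (0:ℝ) hh₀
      filter_upwards [this] with h hh
      simpa using hh
    filter_upwards [self_mem_nhdsWithin, nhdsWithin_le_nhds h1] with h a b using ⟨a, b⟩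
  -- dominated convergence
  have hlim : Tendsto (fun h => ∫ s in (t - L / 2)..(t + L / 2), G h s) (𝓝[≠] 0)
      (𝓝 (∫ s in (0:ℝ)..L, K22clamped γ t (γ t) s * σ s)) := by
    rw [hshift]
    have hmem : ∀ s, s ∈ Set.uIoc (t - L / 2) (t + L / 2) → |s - t| ≤ L / 2 := by
      intro s hs
      rw [Set.uIoc_of_le (by linarith)] at hs
      rw [abs_le]; constructor <;> linarith [hs.1, hs.2]
    refine intervalIntegral.tendsto_integral_filter_of_dominated_convergence
      (fun _ => M * |B| + 1 / π * C1) ?_ ?_ ?_ ?_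
    · filter_upwards [hsmall] with h hh
      have : Continuous (G h) :=
        (hcontK h hh.1 hh.2).add (continuous_const.mul (hcontF h hh.1))
      exact this.aestronglyMeasurable
    · filter_upwards [hsmall] with h hh
      exact Eventually.of_forall fun s hs => hbd h s hh.2 (hmem s hs)
    · exact intervalIntegrable_const
    · have hae : ∀ᵐ s : ℝ, s ≠ t := by
        simp [ae_iff, measure_singleton]
      filter_upwards [hae] with s hst hs
      rw [← hG0]
      have hst' : s - t ≠ 0 := sub_ne_zero.2 hst
      have hca : ContinuousAt (fun h => G h s) 0 := by
        refine ContinuousAt.add (ContinuousAt.mul (K_continuousAt_h t s ?_) continuousAt_const)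
          (continuousAt_const.mul (ContinuousAt.div (by fun_prop) (by fun_prop) (by positivity)))
        apply ne_of_gt
        have := (hM 0 s (by simpa using hh₀.le) (hmem s hs)).1
        simp only [zero_smul, add_zero] at this
        have h2 : 0 < c * ((s - t) ^ 2 + 0 ^ 2) := by positivity
        linarith
      exact hca.tendsto.mono_left nhdsWithin_le_nhds
  have hsplit : ∀ h, h ≠ 0 → |h| ≤ h₀ →
      ∫ s in (0:ℝ)..L, K22clamped γ t (γ t + h • nor γ t) s * σ s
      = (∫ s in (t - L / 2)..(t + L / 2), G h s)
        - 1 / π * σ t * (arctan ((L / 2) / h) - h * (L / 2) / ((L / 2) ^ 2 + h ^ 2)) := by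
    intro h h0 hh
    rw [hshift, ← flat_integral t (L / 2) h h0, ← intervalIntegral.integral_const_mul]
    simp only [hG]
    have hcF : Continuous (fun s => 1 / π * σ t * (h * (s - t) ^ 2 / ((s - t) ^ 2 + h ^ 2) ^ 2)) :=
      continuous_const.mul (hcontF h h0)
    rw [intervalIntegral.integral_add ((hcontK h h0 hh).intervalIntegrable _ _)
      (hcF.intervalIntegrable _ _)]
    ring
  refine ⟨h₀, hh₀, ?_, ⟨M * |B| + 1 / π * C1, ?_⟩, ?_, ?_⟩
  · intro h hpos hlt s heq
    apply hDpos h (abs_pos.1 hpos) hlt.le s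
    rw [heq]; simp [dot2]
  · intro s _
    obtain ⟨s', hs', -, e2, e3⟩ := hred s
    rw [e2, e3, ← hG0]
    exact hbd 0 s' (by simpa using hh₀.le) hs'
  · have hle : 𝓝[>] (0:ℝ) ≤ 𝓝[≠] 0 := nhdsWithin_mono _ (fun x hx => ne_of_gt hx)
    have h1 := (hlim.mono_left hle).sub
      ((flat_lim_pos (L / 2) (by positivity)).const_mul (1 / π * σ t))
    refine (h1.congr' ?_).trans (le_of_eq ?_)
    · filter_upwards [hle hsmall] with h hh using (hsplit h hh.1 hh.2).symm
    · congr 1; field_simp; ring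
  · have hle : 𝓝[<] (0:ℝ) ≤ 𝓝[≠] 0 := nhdsWithin_mono _ (fun x hx => ne_of_lt hx)
    have h1 := (hlim.mono_left hle).sub
      ((flat_lim_neg (L / 2) (by positivity)).const_mul (1 / π * σ t))
    refine (h1.congr' ?_).trans (le_of_eq ?_)
    · filter_upwards [hle hsmall] with h hh using (hsplit h hh.1 hh.2).symm
    · congr 1; field_simp; ring
end
end
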